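/- arXiv:1610.02676 — 4 statements merged into one kernel-verified Lean document; each statement's English description precedes it below -/
import Mathlib

section
/- For every h ≥ 3 there exist ε₀, δ₀ > 0 and C > 0 such that the following holds for every graph H on h vertices, every ε ≤ ε₀, and every positive integer S. Suppose that for every graph G₁ of density at least ε and every equipartition P₀ of V(G₁) of order at most ε^{-C}, there exists a graph on V(G₁) obtained from G₁ by adding/removing at most δ₀|E(G₁)| edges that has an ε^C-regular equipartition refining P₀ of order at most S. Then every n-vertex graph G that cannot be made H-free by deleting fewer than εn² edges contains at least n^h / S^C copies of H. -/
/-!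
Let `G` be `ε`-far from `H`-free. Choose `G₁ ≤ G` maximal among the subgraphs that need at least
`|E(G₁)| / |E(H)|` edge deletions to become `H`-free. Then `G \ G₁` is `H`-free, since a copy of
`H` in it could be added to `G₁`, so `G₁` has at least `ε n²` edges. Because `G₁` is robust, a
constant-factor approximation suffices: the hypothesis supplies `G₂`, differing from `G₁` in at most
`δ₀ |E(G₁)|` edges, with an `ε ^ C`-regular equipartition into at most `S` parts. Discard from `G₁`
the edges not in `G₂` and those in pairs of parts that are irregular, sparse in `G₂`, or contain too
large a proportion of edges of `G₂ \ G₁`. Fewer than `|E(G₁)| / |E(H)|` edges are lost, so a copy of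
`H` survives, and its vertices select parts of the partition.

Between these parts the counting lemma finds the expected number of homomorphisms to `G₂`. If one
edge of `H` is required to map to `G₂ \ G₁` instead, the count drops to a proportion of about
`1 / (2 |E(H)|)`; summing over the edges of `H`, about half of the homomorphisms to `G₂` only use
edges of `G₁`, hence of `G`.

Two observations turn this into the bound `n ^ h / S ^ C`. For a complete graph and the partition
into singletons, the hypothesis forces `S ≥ 1 / ε`, so powers of `ε` are absorbed by powers of `S`.
If `n` exceeds a fixed power of `S`, the non-injective maps are negligible; otherwise the bound is
at most `1` and a single copy suffices.
-/

open Finset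
open scoped Classical

/-- `eCnt G A B` is the number of ordered pairs `(u,v) ∈ A × B` with `uv` an edge of `G`. -/
noncomputable def eCnt {V : Type*} [Fintype V] (G : SimpleGraph V) (A B : Finset V) : ℕ :=
  ((A ×ˢ B).filter fun p => G.Adj p.1 p.2).card

/-- The edge density `d_G(A,B)` between vertex subsets `A` and `B`. -/
noncomputable def dens {V : Type*} [Fintype V] (G : SimpleGraph V) (A B : Finset V) : ℝ :=
  eCnt G A B / (A.card * B.card)

/-- The pair `(A,B)` is `ε`-regular. -/
def RegPair {V : Type*} [Fintype V] (G : SimpleGraph V) (ε : ℝ) (A B : Finset V) : Prop :=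
  ∀ A' ⊆ A, ∀ B' ⊆ B, ε * A.card ≤ A'.card → ε * B.card ≤ B'.card →
    |dens G A B - dens G A' B'| ≤ ε

/-- The density `d_G = 2|E|/|V|²` of a graph. -/
noncomputable def graphDensity {V : Type*} [Fintype V] (G : SimpleGraph V) : ℝ :=
  2 * G.edgeSet.ncard / (Fintype.card V : ℝ) ^ 2

/-- The number of ordered pairs of parts of `P` that are not `ε`-regular. -/
noncomputable def irregCount {V : Type*} [Fintype V] [DecidableEq V] (G : SimpleGraph V)
    (ε : ℝ) (P : Finpartition (univ : Finset V)) : ℕ :=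
  ((P.parts ×ˢ P.parts).filter fun pq => ¬ RegPair G ε pq.1 pq.2).card

/-- A partition of the vertex set is an `ε`-regular partition if all but at most `ε k²`
of the ordered pairs of its parts are `ε`-regular. -/
def IsRegularPartition {V : Type*} [Fintype V] [DecidableEq V] (G : SimpleGraph V)
    (ε : ℝ) (P : Finpartition (univ : Finset V)) : Prop :=
  (irregCount G ε P : ℝ) ≤ ε * (P.parts.card : ℝ) ^ 2

/-- The number of copies of `H` in `G`, i.e. of injective maps `V(H) → V(G)` that map
edges of `H` to edges of `G`. -/
noncomputable def copyCount {α β : Type*} (H : SimpleGraph α) (G : SimpleGraph β) : ℕ :=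
  Nat.card {f : α → β // Function.Injective f ∧ ∀ ⦃a b : α⦄, H.Adj a b → G.Adj (f a) (f b)}

section EdgeCounts

variable {V : Type*} [Fintype V] {G : SimpleGraph V} {A B X Y : Finset V} {η : ℝ}

theorem eCnt_le (G : SimpleGraph V) (A B : Finset V) : eCnt G A B ≤ #A * #B :=
  (card_filter_le _ _).trans (card_product A B).le

theorem eCnt_eq_sum (G : SimpleGraph V) (A B : Finset V) :
    eCnt G A B = ∑ x ∈ A, ∑ y ∈ B, if G.Adj x y then 1 else 0 := by
  rw [eCnt, card_filter, sum_product]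

theorem eCnt_comm (G : SimpleGraph V) (A B : Finset V) : eCnt G A B = eCnt G B A := by
  rw [eCnt_eq_sum, eCnt_eq_sum, sum_comm]
  simp only [G.adj_comm]

theorem dens_comm (G : SimpleGraph V) (A B : Finset V) : dens G A B = dens G B A := by
  rw [_root_.dens, _root_.dens, eCnt_comm, mul_comm]

theorem dens_nonneg (G : SimpleGraph V) (A B : Finset V) : 0 ≤ dens G A B := by
  unfold _root_.dens
  positivity

theorem dens_le_one (G : SimpleGraph V) (A B : Finset V) : dens G A B ≤ 1 :=
  div_le_one_of_le₀ (mod_cast eCnt_le G A B) (by positivity)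

theorem dens_mul_card_mul_card (G : SimpleGraph V) (A B : Finset V) :
    dens G A B * (#A * #B) = eCnt G A B :=
  div_mul_cancel_of_imp fun h ↦ by
    have : #A * #B = 0 := mod_cast h
    exact_mod_cast Nat.le_zero.1 (this ▸ eCnt_le G A B)

theorem RegPair.symm (h : RegPair G η A B) : RegPair G η B A := fun B' hB A' hA hcB hcA ↦ by
  rw [dens_comm G B, dens_comm G B']
  exact h A' hA B' hB hcA hcB

theorem RegPair.nonneg (h : RegPair G η A B) : 0 ≤ η := by
  by_contra! hη
  have hle (C : Finset V) : η * #C ≤ #C := by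
    nlinarith [(#C).cast_nonneg (α := ℝ)]
  linarith [abs_nonneg (dens G A B - dens G A B), h A subset_rfl B subset_rfl (hle A) (hle B)]

/-- For subsets too small for `RegPair` to apply, the bound is trivial. -/
theorem RegPair.abs_eCnt_sub_le (h : RegPair G η A B) (hX : X ⊆ A) (hY : Y ⊆ B) :
    |eCnt G X Y - dens G A B * (#X * #Y)| ≤ η * (#A * #B) := by
  have hη := h.nonneg
  have hXA : (#X : ℝ) ≤ #A := mod_cast card_le_card hX
  have hYB : (#Y : ℝ) ≤ #B := mod_cast card_le_card hY
  have htriv : |dens G X Y - dens G A B| ≤ 1 :=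
    abs_sub_le_of_nonneg_of_le (dens_nonneg ..) (dens_le_one ..) (dens_nonneg ..) (dens_le_one ..)
  have hXY : (0 : ℝ) ≤ #X * #Y := by positivity
  rw [← dens_mul_card_mul_card, ← sub_mul, abs_mul, abs_of_nonneg hXY]
  rcases le_or_gt (η * #A) #X with hXη | hXη
  · rcases le_or_gt (η * #B) #Y with hYη | hYη
    · rw [abs_sub_comm]
      gcongr
      exact h X hX Y hY hXη hYη
    · calc |dens G X Y - dens G A B| * (#X * #Y) ≤ 1 * (#A * (η * #B)) := by gcongr
        _ = η * (#A * #B) := by ring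
  · calc |dens G X Y - dens G A B| * (#X * #Y) ≤ 1 * (η * #A * #B) := by gcongr
      _ = η * (#A * #B) := by ring

variable {α : Type*}

/-- The density of `G` between the two classes indexed by the ends of `e`. -/
noncomputable def partDens (A : α → Finset V) (G : SimpleGraph V) : Sym2 α → ℝ :=
  Sym2.lift ⟨fun a b ↦ dens G (A a) (A b), fun _ _ ↦ dens_comm ..⟩

theorem partDens_nonneg (A : α → Finset V) (G : SimpleGraph V) (e : Sym2 α) :
    0 ≤ partDens A G e :=
  e.ind fun _ _ ↦ dens_nonneg ..

theorem partDens_le_one (A : α → Finset V) (G : SimpleGraph V) (e : Sym2 α) :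
    partDens A G e ≤ 1 :=
  e.ind fun _ _ ↦ dens_le_one ..

end EdgeCounts

section Resampling

variable {ι : Type*} [Fintype ι] [DecidableEq ι] {V : ι → Type*} {M : Type*} [AddCommMonoid M]

/-- The map `(f, x) ↦ (Function.update f a x, f a)` is an involution. -/
theorem card_nsmul_sum_piFinset (A : ∀ a, Finset (V a)) (F : (∀ a, V a) → M) (a : ι) :
    #(A a) • ∑ f ∈ Fintype.piFinset A, F f =
      ∑ f ∈ Fintype.piFinset A, ∑ x ∈ A a, F (Function.update f a x) := by
  let swap (z : (∀ a, V a) × V a) : (∀ a, V a) × V a := (Function.update z.1 a z.2, z.1 a)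
  have hswap : ∀ z ∈ Fintype.piFinset A ×ˢ A a, swap z ∈ Fintype.piFinset A ×ˢ A a := by
    rintro ⟨f, x⟩ hz
    simp only [mem_product, Fintype.mem_piFinset, swap] at hz ⊢
    refine ⟨fun b ↦ ?_, hz.1 a⟩
    rcases eq_or_ne b a with rfl | hb
    · simpa using hz.2
    · simpa [hb] using hz.1 b
  calc #(A a) • ∑ f ∈ Fintype.piFinset A, F f
      = ∑ z ∈ Fintype.piFinset A ×ˢ A a, F z.1 := by simp [sum_product, sum_nsmul]
    _ = ∑ z ∈ Fintype.piFinset A ×ˢ A a, F (Function.update z.1 a z.2) :=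
        sum_nbij' swap swap hswap hswap (by simp [swap]) (by simp [swap]) (by simp [swap])
    _ = _ := sum_product ..

theorem card_mul_card_nsmul_sum_piFinset (A : ∀ a, Finset (V a)) (F : (∀ a, V a) → M) (a b : ι) :
    (#(A a) * #(A b)) • ∑ f ∈ Fintype.piFinset A, F f =
      ∑ f ∈ Fintype.piFinset A, ∑ x ∈ A a, ∑ y ∈ A b,
        F (Function.update (Function.update f a x) b y) := by
  rw [mul_nsmul', card_nsmul_sum_piFinset A F b, card_nsmul_sum_piFinset A _ a]

end Resampling

section Homomorphisms

variable {α V : Type*} {R R' : Sym2 α → SimpleGraph V} {E T : Finset (Sym2 α)} {f : α → V} {a b : α}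

theorem sym2_map_update_of_notMem {e : Sym2 α} (hb : b ∉ e) (f : α → V) (y : V) :
    e.map (Function.update f b y) = e.map f :=
  Sym2.map_congr fun _ hc ↦ Function.update_of_ne (ne_of_mem_of_not_mem hc hb) ..

/-- `f` maps each pair `e ∈ E` to an edge of the graph `R e`. Letting the target graph depend on
the pair makes it possible to exchange the graph for one pair at a time. -/
def IsHomOn (R : Sym2 α → SimpleGraph V) (E : Finset (Sym2 α)) (f : α → V) : Prop :=
  ∀ e ∈ E, e.map f ∈ (R e).edgeSet

theorem isHomOn_insert {e : Sym2 α} :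
    IsHomOn R (insert e E) f ↔ e.map f ∈ (R e).edgeSet ∧ IsHomOn R E f :=
  forall_mem_insert ..

theorem isHomOn_update_update_iff (hab : a ≠ b) (he : s(a, b) ∉ E) (f : α → V) (x y : V) :
    IsHomOn R E (Function.update (Function.update f a x) b y) ↔
      IsHomOn R {e ∈ E | b ∉ e} (Function.update f a x) ∧
        IsHomOn R {e ∈ E | b ∈ e} (Function.update f b y) := by
  have ha : ∀ e ∈ E, b ∈ e → a ∉ e := fun e heE hb ha ↦
    he ((Sym2.mem_and_mem_iff hab).1 ⟨ha, hb⟩ ▸ heE)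
  simp only [IsHomOn, mem_filter, and_imp]
  refine ⟨fun h ↦ ⟨fun e heE hb ↦ ?_, fun e heE hb ↦ ?_⟩, fun ⟨h₁, h₂⟩ e heE ↦ ?_⟩
  · simpa only [sym2_map_update_of_notMem hb] using h e heE
  · simpa only [Function.update_comm hab, sym2_map_update_of_notMem (ha e heE hb)] using h e heE
  · by_cases hb : b ∈ e
    · simpa only [Function.update_comm hab, sym2_map_update_of_notMem (ha e heE hb)]
        using h₂ e heE hb
    · simpa only [sym2_map_update_of_notMem hb] using h₁ e heE hb

theorem isHomOn_edgeFinset [Fintype α] {H : SimpleGraph α} {G : SimpleGraph V} :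
    IsHomOn (fun _ ↦ G) H.edgeFinset f ↔ ∀ ⦃a b⦄, H.Adj a b → G.Adj (f a) (f b) := by
  simp only [IsHomOn, SimpleGraph.mem_edgeFinset, Sym2.forall, Sym2.map_mk,
    SimpleGraph.mem_edgeSet]

/-- The values at `a` for which `f`, modified there, satisfies the constraints of `IsHomOn R E`. -/
noncomputable def extensions (A : α → Finset V) (R : Sym2 α → SimpleGraph V)
    (E : Finset (Sym2 α)) (f : α → V) (a : α) : Finset V :=
  {x ∈ A a | IsHomOn R E (Function.update f a x)}

/-- The number of maps `f` with `f a ∈ A a` for all `a` that satisfy `IsHomOn R E`. -/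
noncomputable def homCount [Fintype α] (A : α → Finset V) (R : Sym2 α → SimpleGraph V)
    (E : Finset (Sym2 α)) : ℕ :=
  #{f ∈ Fintype.piFinset A | IsHomOn R E f}

variable [Fintype α] {A : α → Finset V}

theorem homCount_empty (A : α → Finset V) (R : Sym2 α → SimpleGraph V) :
    homCount A R ∅ = ∏ a, #(A a) := by
  simp [homCount, IsHomOn]

theorem homCount_mono (h : ∀ e ∈ E, R e ≤ R' e) : homCount A R E ≤ homCount A R' E :=
  card_le_card <| monotone_filter_right _ fun _ _ hf e he ↦
    SimpleGraph.edgeSet_mono (h e he) (hf e he)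

/-- A homomorphism to `G₂` that uses an edge outside `G₁` is counted at one such edge. -/
theorem homCount_le_inf_add_sum (G₁ G₂ : SimpleGraph V) (A : α → Finset V) (E : Finset (Sym2 α)) :
    homCount A (fun _ ↦ G₂) E ≤ homCount A (fun _ ↦ G₁ ⊓ G₂) E +
      ∑ q ∈ E, homCount A (Function.update (fun _ ↦ G₂) q (G₂ \ G₁)) E := by
  have hcover : {f ∈ Fintype.piFinset A | IsHomOn (fun _ ↦ G₂) E f} ⊆
      {f ∈ Fintype.piFinset A | IsHomOn (fun _ ↦ G₁ ⊓ G₂) E f} ∪ E.biUnion fun q ↦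
        {f ∈ Fintype.piFinset A | IsHomOn (Function.update (fun _ ↦ G₂) q (G₂ \ G₁)) E f} := by
    intro f hf
    simp only [mem_union, mem_biUnion, mem_filter] at hf ⊢
    obtain ⟨hfA, hf⟩ := hf
    by_cases h₁ : ∀ e ∈ E, e.map f ∈ G₁.edgeSet
    · exact Or.inl ⟨hfA, fun e he ↦ by simpa using ⟨h₁ e he, hf e he⟩⟩
    · push Not at h₁
      obtain ⟨q, hq, hqf⟩ := h₁
      refine Or.inr ⟨q, hq, hfA, fun e he ↦ ?_⟩
      rcases eq_or_ne e q with rfl | heq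
      · simpa [SimpleGraph.edgeSet_sdiff] using ⟨hf e he, hqf⟩
      · simpa [heq] using hf e he
  exact (card_le_card hcover).trans <|
    (card_union_le ..).trans (Nat.add_le_add_left card_biUnion_le _)

theorem card_mul_card_mul_homCount (hab : a ≠ b) (he : s(a, b) ∉ E) :
    #(A a) * #(A b) * homCount A R E =
      ∑ f ∈ Fintype.piFinset A,
        #(extensions A R {e ∈ E | b ∉ e} f a) * #(extensions A R {e ∈ E | b ∈ e} f b) := by
  rw [homCount, card_filter, ← smul_eq_mul, card_mul_card_nsmul_sum_piFinset]
  refine sum_congr rfl fun f _ ↦ ?_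
  simp only [isHomOn_update_update_iff hab he, extensions, card_filter, sum_mul_sum,
    ite_zero_mul_ite_zero, mul_one]

variable [Fintype V] {τ : ℝ}

theorem card_mul_card_mul_homCount_insert (hab : a ≠ b) (he : s(a, b) ∉ E) :
    #(A a) * #(A b) * homCount A R (insert s(a, b) E) =
      ∑ f ∈ Fintype.piFinset A, eCnt (R s(a, b))
        (extensions A R {e ∈ E | b ∉ e} f a) (extensions A R {e ∈ E | b ∈ e} f b) := by
  rw [homCount, card_filter, ← smul_eq_mul, card_mul_card_nsmul_sum_piFinset]
  refine sum_congr rfl fun f _ ↦ ?_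
  simp only [isHomOn_insert, isHomOn_update_update_iff hab he, extensions, eCnt_eq_sum,
    sum_filter, Sym2.map_mk, SimpleGraph.mem_edgeSet, Function.update_self,
    Function.update_of_ne hab, ite_and]
  refine sum_congr rfl fun x _ ↦ ?_
  split_ifs
  · exact sum_congr rfl fun y _ ↦ by split_ifs <;> rfl
  · simp

/-- With all coordinates but two frozen, the constraints in `E` amount to restricting the two ends
of the new edge to subsets, where regularity controls the number of edges. -/
theorem abs_homCount_insert_sub_le (hA : ∀ a, (A a).Nonempty) (hab : a ≠ b) (he : s(a, b) ∉ E)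
    (hreg : RegPair (R s(a, b)) τ (A a) (A b)) :
    |homCount A R (insert s(a, b) E) - dens (R s(a, b)) (A a) (A b) * homCount A R E|
      ≤ τ * ∏ c, (#(A c) : ℝ) := by
  set d := dens (R s(a, b)) (A a) (A b)
  set X := extensions A R {e ∈ E | b ∉ e}
  set Y := extensions A R {e ∈ E | b ∈ e}
  have hpos : (0 : ℝ) < #(A a) * #(A b) := by
    have := (hA a).card_pos
    have := (hA b).card_pos
    positivity
  have hins : (#(A a) * #(A b) : ℝ) * homCount A R (insert s(a, b) E) =
      ∑ f ∈ Fintype.piFinset A, (eCnt (R s(a, b)) (X f a) (Y f b) : ℝ) :=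
    mod_cast card_mul_card_mul_homCount_insert hab he
  have hold : (#(A a) * #(A b) : ℝ) * homCount A R E =
      ∑ f ∈ Fintype.piFinset A, (#(X f a) * #(Y f b) : ℝ) :=
    mod_cast card_mul_card_mul_homCount hab he
  refine le_of_mul_le_mul_left ?_ hpos
  calc (#(A a) * #(A b) : ℝ) * |homCount A R (insert s(a, b) E) - d * homCount A R E|
      = |∑ f ∈ Fintype.piFinset A,
          ((eCnt (R s(a, b)) (X f a) (Y f b) : ℝ) - d * (#(X f a) * #(Y f b)))| := by
        rw [sum_sub_distrib, ← mul_sum, ← hins, ← hold, ← abs_of_pos hpos, ← abs_mul,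
          abs_of_pos hpos]
        ring_nf
    _ ≤ ∑ _f ∈ Fintype.piFinset A, τ * (#(A a) * #(A b)) :=
        (abs_sum_le_sum_abs ..).trans <| sum_le_sum fun _ _ ↦
          hreg.abs_eCnt_sub_le (filter_subset ..) (filter_subset ..)
    _ = #(A a) * #(A b) * (τ * ∏ c, (#(A c) : ℝ)) := by
        rw [sum_const, Fintype.card_piFinset, nsmul_eq_mul]
        push_cast
        ring

theorem abs_homCount_union_sub_le (hA : ∀ a, (A a).Nonempty)
    (hT : ∀ a b, s(a, b) ∈ T → a ≠ b ∧ RegPair (R s(a, b)) τ (A a) (A b)) (hTE : Disjoint T E) :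
    |homCount A R (T ∪ E) - (∏ e ∈ T, partDens A (R e) e) * homCount A R E|
      ≤ #T * τ * ∏ c, (#(A c) : ℝ) := by
  induction T using Finset.induction_on with
  | empty => simp
  | insert e T heT ih =>
    rw [disjoint_insert_left] at hTE
    have hT' := ih (fun a b h ↦ hT a b (mem_insert_of_mem h)) hTE.2
    have he : |homCount A R (insert e (T ∪ E)) - partDens A (R e) e * homCount A R (T ∪ E)|
        ≤ τ * ∏ c, (#(A c) : ℝ) := by
      induction e with | _ a b =>
      obtain ⟨hab, hreg⟩ := hT a b (mem_insert_self ..)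
      exact abs_homCount_insert_sub_le hA hab (by simp [heT, hTE.1]) hreg
    rw [insert_union, prod_insert heT, card_insert_of_notMem heT]
    set d := partDens A (R e) e
    set D := ∏ e ∈ T, partDens A (R e) e
    calc |homCount A R (insert e (T ∪ E)) - d * D * homCount A R E|
        = |(homCount A R (insert e (T ∪ E)) - d * homCount A R (T ∪ E)) +
            d * (homCount A R (T ∪ E) - D * homCount A R E)| := by ring_nf
      _ ≤ τ * ∏ c, (#(A c) : ℝ) + 1 * (#T * τ * ∏ c, (#(A c) : ℝ)) := by
        refine (abs_add_le ..).trans (add_le_add he ?_)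
        rw [abs_mul, abs_of_nonneg (partDens_nonneg ..)]
        gcongr
        exact partDens_le_one ..
      _ = ↑(#T + 1) * τ * ∏ c, (#(A c) : ℝ) := by
        push_cast
        ring

theorem homCount_singleton {e : Sym2 α} (he : ¬e.IsDiag) (hA : ∀ a, (A a).Nonempty) :
    (homCount A R {e} : ℝ) = partDens A (R e) e * ∏ c, (#(A c) : ℝ) := by
  induction e with | _ a b =>
  have hpos : (#(A a) * #(A b) : ℝ) ≠ 0 := by simp [(hA a).ne_empty, (hA b).ne_empty]
  have key := card_mul_card_mul_homCount_insert (A := A) (R := R) he (notMem_empty s(a, b))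
  simp only [filter_empty, extensions, IsHomOn, notMem_empty, IsEmpty.forall_iff, implies_true,
    filter_true, sum_const, Fintype.card_piFinset, smul_eq_mul, insert_empty_eq] at key
  refine mul_left_cancel₀ hpos ?_
  calc (#(A a) * #(A b) : ℝ) * homCount A R {s(a, b)}
      = (∏ c, (#(A c) : ℝ)) * eCnt (R s(a, b)) (A a) (A b) := mod_cast key
    _ = #(A a) * #(A b) * (dens (R s(a, b)) (A a) (A b) * ∏ c, (#(A c) : ℝ)) := by
      rw [← dens_mul_card_mul_card]
      ring

end Homomorphisms

section GoodPairs

variable {V : Type*} [Fintype V] {G₁ G₂ : SimpleGraph V} {η γ ρ : ℝ}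

/-- The pair `(A, B)` is usable for counting: it is `η`-regular and of density at least `ρ` in the
approximating graph `G₂`, and all but a proportion `γ` of the `G₂`-edges in it lie in `G₁`. -/
def GoodPair (G₁ G₂ : SimpleGraph V) (η γ ρ : ℝ) (A B : Finset V) : Prop :=
  RegPair G₂ η A B ∧ ρ ≤ dens G₂ A B ∧ dens (G₂ \ G₁) A B ≤ γ * dens G₂ A B

theorem GoodPair.symm {A B : Finset V} (h : GoodPair G₁ G₂ η γ ρ A B) :
    GoodPair G₁ G₂ η γ ρ B A := by
  simpa only [GoodPair, dens_comm _ B A] using And.intro h.1.symm h.2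

variable {α : Type*} [Fintype α] {A : α → Finset V} {E : Finset (Sym2 α)} {q : Sym2 α}

theorem homCount_update_sdiff_le (hA : ∀ a, (A a).Nonempty)
    (hE : ∀ a b, s(a, b) ∈ E → a ≠ b ∧ GoodPair G₁ G₂ η γ ρ (A a) (A b)) (hq : q ∈ E) :
    homCount A (Function.update (fun _ ↦ G₂) q (G₂ \ G₁)) E ≤
      (γ * ∏ e ∈ E, partDens A G₂ e + (#E - 1) * η) * ∏ c, (#(A c) : ℝ) := by
  set R : Sym2 α → SimpleGraph V := Function.update (fun _ ↦ G₂) q (G₂ \ G₁)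
  set P := ∏ c, (#(A c) : ℝ)
  have hR : ∀ e ∈ E.erase q, R e = G₂ := fun e he ↦ Function.update_of_ne (ne_of_mem_erase he) ..
  have hRq : R q = G₂ \ G₁ := Function.update_self ..
  have hq' : ¬q.IsDiag ∧ partDens A (G₂ \ G₁) q ≤ γ * partDens A G₂ q := by
    induction q with | _ a b => exact ⟨(hE a b hq).1, (hE a b hq).2.2.2⟩
  have hcount := abs_homCount_union_sub_le (E := {q}) (R := R) hA
    (fun a b hab ↦ ⟨(hE a b (mem_of_mem_erase hab)).1, by
      rw [hR _ hab]; exact (hE a b (mem_of_mem_erase hab)).2.1⟩)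
    (disjoint_singleton_right.2 (notMem_erase q E))
  rw [union_comm, ← insert_eq, insert_erase hq, homCount_singleton hq'.1 hA, hRq,
    prod_congr rfl fun e he ↦ by rw [hR e he], cast_card_erase_of_mem hq] at hcount
  set D := ∏ e ∈ E.erase q, partDens A G₂ e
  have hD : 0 ≤ D := prod_nonneg fun e _ ↦ partDens_nonneg ..
  calc (homCount A R E : ℝ)
      ≤ D * (partDens A (G₂ \ G₁) q * P) + (#E - 1) * η * P := by linarith [(abs_le.1 hcount).2]
    _ ≤ D * (γ * partDens A G₂ q * P) + (#E - 1) * η * P := by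
      gcongr
      exact hq'.2
    _ = _ := by
      rw [← prod_erase_mul E _ hq]
      ring

/-- If every pair `e ∈ E` carries a good pair of classes, then about half of the homomorphisms to
`G₂` found by the counting lemma only use edges of `G₁`. -/
theorem homCount_inf_ge (hA : ∀ a, (A a).Nonempty)
    (hE : ∀ a b, s(a, b) ∈ E → a ≠ b ∧ GoodPair G₁ G₂ η γ ρ (A a) (A b))
    (hρ : 0 ≤ ρ) (hγ : #E * γ ≤ 1 / 2) :
    (ρ ^ #E / 2 - #E ^ 2 * η) * ∏ c, (#(A c) : ℝ) ≤ homCount A (fun _ ↦ G₁ ⊓ G₂) E := by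
  set P := ∏ c, (#(A c) : ℝ)
  set D := ∏ e ∈ E, partDens A G₂ e
  have hρD : ρ ^ #E ≤ D := by
    rw [← prod_const]
    refine prod_le_prod (fun _ _ ↦ hρ) fun e he ↦ ?_
    induction e with | _ a b => exact (hE a b he).2.2.1
  have hall : (D - #E * η) * P ≤ homCount A (fun _ ↦ G₂) E := by
    have h := abs_homCount_union_sub_le (E := ∅) (R := fun _ ↦ G₂) hA
      (fun a b hab ↦ ⟨(hE a b hab).1, (hE a b hab).2.1⟩) (disjoint_empty_right E)
    rw [union_empty, homCount_empty] at h
    push_cast at h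
    linarith [(abs_le.1 h).1]
  have hsplit : (homCount A (fun _ ↦ G₂) E : ℝ) ≤ homCount A (fun _ ↦ G₁ ⊓ G₂) E +
      ∑ q ∈ E, (homCount A (Function.update (fun _ ↦ G₂) q (G₂ \ G₁)) E : ℝ) :=
    mod_cast homCount_le_inf_add_sum G₁ G₂ A E
  have hlost : ∑ q ∈ E, (homCount A (Function.update (fun _ ↦ G₂) q (G₂ \ G₁)) E : ℝ) ≤
      #E * ((γ * D + (#E - 1) * η) * P) := by
    rw [← nsmul_eq_mul]
    exact sum_le_card_nsmul _ _ _ fun q hq ↦ homCount_update_sdiff_le hA hE hq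
  calc (ρ ^ #E / 2 - #E ^ 2 * η) * P
      ≤ (D - 1 / 2 * D - #E ^ 2 * η) * P := by
        gcongr
        linarith
    _ ≤ (D - #E * γ * D - #E ^ 2 * η) * P := by
        gcongr
        exact (pow_nonneg hρ _).trans hρD
    _ = (D - #E * η) * P - #E * ((γ * D + (#E - 1) * η) * P) := by ring
    _ ≤ homCount A (fun _ ↦ G₁ ⊓ G₂) E := by linarith

end GoodPairs

section Copies

variable {α V : Type*} [Fintype α] {A : α → Finset V} {a b : α} {s : ℝ}

theorem card_mul_card_filter_apply_eq_le (hab : a ≠ b) :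
    #(A a) * #{f ∈ Fintype.piFinset A | f a = f b} ≤ ∏ c, #(A c) := by
  rw [card_filter, ← smul_eq_mul, card_nsmul_sum_piFinset, ← Fintype.card_piFinset,
    card_eq_sum_ones]
  refine sum_le_sum fun f _ ↦ ?_
  simp only [Function.update_self, Function.update_of_ne hab.symm, sum_ite_eq']
  split_ifs <;> simp

theorem mul_card_filter_not_injective_le (hs : 0 ≤ s) (hsA : ∀ a, s ≤ #(A a)) :
    s * #{f ∈ Fintype.piFinset A | ¬Function.Injective f} ≤
      (Fintype.card α : ℝ) ^ 2 * ∏ a, (#(A a) : ℝ) := by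
  have hcover : {f ∈ Fintype.piFinset A | ¬Function.Injective f} ⊆
      (univ : Finset α).offDiag.biUnion fun q ↦ {f ∈ Fintype.piFinset A | f q.1 = f q.2} := by
    intro f hf
    obtain ⟨hfA, hf⟩ := mem_filter.1 hf
    obtain ⟨a, b, hfab, hab⟩ := Function.not_injective_iff.1 hf
    exact mem_biUnion.2 ⟨(a, b), by simpa using hab, mem_filter.2 ⟨hfA, hfab⟩⟩
  calc s * #{f ∈ Fintype.piFinset A | ¬Function.Injective f}
      ≤ s * ∑ q ∈ (univ : Finset α).offDiag, (#{f ∈ Fintype.piFinset A | f q.1 = f q.2} : ℝ) := by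
        gcongr
        exact_mod_cast (card_le_card hcover).trans card_biUnion_le
    _ ≤ ∑ q ∈ (univ : Finset α).offDiag, ∏ a, (#(A a) : ℝ) := by
        rw [mul_sum]
        refine sum_le_sum fun q hq ↦ ?_
        calc s * #{f ∈ Fintype.piFinset A | f q.1 = f q.2}
            ≤ #(A q.1) * #{f ∈ Fintype.piFinset A | f q.1 = f q.2} := by
              gcongr
              exact hsA q.1
          _ ≤ ∏ a, (#(A a) : ℝ) :=
            mod_cast card_mul_card_filter_apply_eq_le (mem_offDiag.1 hq).2.2
    _ ≤ (Fintype.card α : ℝ) ^ 2 * ∏ a, (#(A a) : ℝ) := by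
        rw [sum_const, nsmul_eq_mul, offDiag_card, card_univ, sq]
        gcongr
        exact_mod_cast Nat.sub_le ..

theorem homCount_le_copyCount_add [Finite V] (H : SimpleGraph α) (G : SimpleGraph V)
    (A : α → Finset V) :
    homCount A (fun _ ↦ G) H.edgeFinset ≤
      copyCount H G + #{f ∈ Fintype.piFinset A | ¬Function.Injective f} := by
  have := Fintype.ofFinite V
  have hcopy : copyCount H G =
      #{f : α → V | Function.Injective f ∧ ∀ ⦃a b⦄, H.Adj a b → G.Adj (f a) (f b)} := by
    rw [copyCount, Nat.card_eq_fintype_card, Fintype.card_subtype]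
  rw [hcopy]
  refine (card_le_card fun f hf ↦ ?_).trans (card_union_le ..)
  simp only [mem_filter, isHomOn_edgeFinset, mem_union, mem_univ, true_and] at hf ⊢
  tauto

/-- The classes have at least `s = n / (2S)` elements, so a proportion at most `h² / s` of the maps
is not injective. -/
theorem pow_div_pow_le_copyCount [Nonempty α] [Fintype V] {H : SimpleGraph α} {G : SimpleGraph V}
    {S : ℝ} {L : ℕ} (hS : 2 ≤ S) (hhS : 2 * (Fintype.card α : ℝ) ^ 2 ≤ S)
    (hV : S ^ (L + 2) ≤ Fintype.card V)
    (hA : ∀ a, Fintype.card V ≤ 2 * S * #(A a))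
    (hhom : 2 * ∏ a, (#(A a) : ℝ) ≤ S ^ L * homCount A (fun _ ↦ G) H.edgeFinset) :
    (Fintype.card V : ℝ) ^ Fintype.card α / S ^ (L + 2 * Fintype.card α) ≤ copyCount H G := by
  set h := Fintype.card α
  set n := (Fintype.card V : ℝ)
  set s := n / (2 * S) with hs_def
  set P := ∏ a, (#(A a) : ℝ)
  set N := (#{f ∈ Fintype.piFinset A | ¬Function.Injective f} : ℝ)
  have hn : n = 2 * S * s := by rw [hs_def]; field_simp
  have hs : (h : ℝ) ^ 2 * S ^ L ≤ s := by
    rw [hs_def, le_div_iff₀ (by positivity)]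
    calc (h : ℝ) ^ 2 * S ^ L * (2 * S) = 2 * (h : ℝ) ^ 2 * S ^ (L + 1) := by ring
      _ ≤ S * S ^ (L + 1) := by gcongr
      _ ≤ n := by rw [← pow_succ']; exact hV
  have hn0 : 0 < n := lt_of_lt_of_le (by positivity) hV
  have hs0 : 0 < s := by positivity
  have hsA (a : α) : s ≤ #(A a) := by
    rw [hs_def, div_le_iff₀' (by positivity)]
    exact hA a
  have hP : s ^ h ≤ P := by
    simpa [h] using prod_le_prod (fun _ _ ↦ hs0.le) fun a (_ : a ∈ univ) ↦ hsA a
  have hN : S ^ L * N ≤ P := by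
    have hh : (0 : ℝ) < h ^ 2 := by have := Fintype.card_pos (α := α); positivity
    refine le_of_mul_le_mul_left ?_ hh
    calc (h : ℝ) ^ 2 * (S ^ L * N) = h ^ 2 * S ^ L * N := (mul_assoc ..).symm
      _ ≤ s * N := mul_le_mul_of_nonneg_right hs (Nat.cast_nonneg _)
      _ ≤ h ^ 2 * P := mul_card_filter_not_injective_le hs0.le hsA
  have hcopy : (homCount A (fun _ ↦ G) H.edgeFinset : ℝ) ≤ copyCount H G + N := by
    simpa [N] using Nat.cast_le (α := ℝ).2 (homCount_le_copyCount_add H G A)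
  rw [div_le_iff₀ (by positivity)]
  calc n ^ h = (2 * S) ^ h * s ^ h := by rw [hn, mul_pow]
    _ ≤ (S * S) ^ h * P := by gcongr
    _ ≤ (S * S) ^ h * (S ^ L * copyCount H G) := by
      gcongr
      nlinarith [pow_pos (by linarith : 0 < S) L]
    _ = copyCount H G * S ^ (L + 2 * h) := by ring

end Copies

section FarFromFree

theorem antitone_free {α V : Type*} (H : SimpleGraph α) :
    Antitone fun G : SimpleGraph V ↦ H.Free G :=
  fun _ _ hle hfree hcopy ↦ hfree (hcopy.mono_right hle)

variable {α V : Type*} [Finite V] {H : SimpleGraph α} {G G₁ G₂ : SimpleGraph V}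
  {p : SimpleGraph V → Prop} {r r₁ r₂ : ℝ}

theorem copyCount_eq_zero_iff_free [Finite α] (H : SimpleGraph α) (G : SimpleGraph V) :
    copyCount H G = 0 ↔ H.Free G := by
  rw [copyCount, Finite.card_eq_zero_iff, ← not_nonempty_iff]
  exact not_congr ⟨fun ⟨f, hf, hadj⟩ ↦ ⟨⟨f, @hadj⟩, hf⟩,
    fun ⟨f⟩ ↦ ⟨f, f.injective, fun _ _ ↦ f.toHom.map_adj⟩⟩

theorem deleteFar_iff_le_ncard_sdiff [Fintype G.edgeSet] :
    G.DeleteFar p r ↔ ∀ G' ≤ G, p G' → r ≤ (G.edgeSet \ G'.edgeSet).ncard := by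
  refine ⟨fun h G' hG' hp ↦ ?_, fun h s hs hp ↦ ?_⟩
  · have := Fintype.ofFinite G'.edgeSet
    have hdel := h (sdiff_subset (t := G'.edgeFinset))
      (by simpa [SimpleGraph.deleteEdges_sdiff_eq_of_le hG'] using hp)
    simpa [← Set.ncard_coe_finset] using hdel
  · simpa [SimpleGraph.edgeSet_deleteEdges, Set.inter_eq_right.2 (Set.subset_toFinset.1 hs)]
      using h _ (G.deleteEdges_le s) hp

theorem one_le_copyCount_of_deleteFar [Finite α] [Fintype G.edgeSet]
    (hfar : G.DeleteFar H.Free r) (hr : 0 < r) :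
    1 ≤ copyCount H G := by
  rw [Nat.one_le_iff_ne_zero, Ne, copyCount_eq_zero_iff_free]
  intro hfree
  have hle := deleteFar_iff_le_ncard_sdiff.1 hfar G le_rfl hfree
  simp only [sdiff_self, Set.bot_eq_empty, Set.ncard_empty, Nat.cast_zero] at hle
  exact hle.not_gt hr

/-- Deleting edges from `G₁ ⊔ G₂` deletes edges from `G₁` and from `G₂` separately. -/
theorem deleteFar_sup [Fintype G₁.edgeSet] [Fintype G₂.edgeSet] [Fintype (G₁ ⊔ G₂).edgeSet]
    (hp : Antitone p) (hdisj : Disjoint G₁ G₂) (h₁ : G₁.DeleteFar p r₁) (h₂ : G₂.DeleteFar p r₂) :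
    (G₁ ⊔ G₂).DeleteFar p (r₁ + r₂) := by
  rw [deleteFar_iff_le_ncard_sdiff] at h₁ h₂ ⊢
  intro G' _ hG'
  have hlost : G₁.edgeSet \ (G₁ ⊓ G').edgeSet ∪ G₂.edgeSet \ (G₂ ⊓ G').edgeSet =
      (G₁ ⊔ G₂).edgeSet \ G'.edgeSet := by
    simp only [SimpleGraph.edgeSet_inf, SimpleGraph.edgeSet_sup, Set.sdiff_self_inter,
      Set.union_sdiff_distrib]
  rw [← hlost, Set.ncard_union_eq ((SimpleGraph.disjoint_edgeSet.2 hdisj).mono Set.sdiff_subset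
    Set.sdiff_subset), Nat.cast_add]
  exact add_le_add (h₁ _ inf_le_left (hp inf_le_right hG')) (h₂ _ inf_le_left (hp inf_le_right hG'))

/-- A substitute for a maximal union of edge-disjoint copies of `H`: every such union is far from
`H`-free, and one only needs a maximal subgraph with this property. -/
theorem exists_le_free_sdiff_and_deleteFar [Fintype α] [Fintype V] (hH : H ≠ ⊥)
    (G : SimpleGraph V) :
    ∃ G₁ ≤ G, H.Free (G \ G₁) ∧ G₁.DeleteFar H.Free (G₁.edgeSet.ncard / #H.edgeFinset : ℝ) := by
  have hk : (0 : ℝ) < #H.edgeFinset := by simpa [card_pos] using hH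
  obtain ⟨G₁, hmax⟩ := (Set.toFinite {G₁ | G₁ ≤ G ∧
    G₁.DeleteFar H.Free (G₁.edgeSet.ncard / #H.edgeFinset : ℝ)}).exists_maximal
    ⟨⊥, bot_le, fun s _ _ ↦ by simp⟩
  refine ⟨G₁, hmax.prop.1, fun hcopy ↦ ?_, hmax.prop.2⟩
  obtain ⟨f, hf⟩ := SimpleGraph.isContained_iff_exists_le_comap.1 hcopy
  have hK : H.map f ≤ G \ G₁ := (SimpleGraph.map_le_iff_le_comap ..).2 hf
  have hdisj : Disjoint G₁ (H.map f) := disjoint_sdiff_self_right.mono_right hK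
  have hKcard : (H.map f).edgeSet.ncard = #H.edgeFinset := by
    rw [SimpleGraph.edgeSet_map, Set.ncard_image_of_injective _ f.sym2Map.injective,
      ← SimpleGraph.coe_edgeFinset, Set.ncard_coe_finset]
  have hKfar : (H.map f).DeleteFar H.Free (1 : ℝ) := fun s _ hfree ↦ by
    rw [Nat.one_le_cast, one_le_card, nonempty_iff_ne_empty]
    rintro rfl
    refine hfree ?_
    simpa using ⟨(SimpleGraph.Embedding.map f H).toCopy⟩
  have hsup : (G₁ ⊔ H.map f).DeleteFar H.Free
      ((G₁ ⊔ H.map f).edgeSet.ncard / #H.edgeFinset : ℝ) := by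
    convert! deleteFar_sup (antitone_free H) hdisj hmax.prop.2 hKfar using 1
    rw [SimpleGraph.edgeSet_sup, Set.ncard_union_eq (SimpleGraph.disjoint_edgeSet.2 hdisj), hKcard]
    push_cast
    field_simp
  have hle : H.map f ≤ G₁ := le_sup_right.trans <| hmax.le_of_ge
    ⟨sup_le hmax.prop.1 (hK.trans sdiff_le), by convert hsup⟩ le_sup_left
  have hbot : H.map f = ⊥ := disjoint_self.1 (hdisj.mono_left hle)
  rw [hbot, SimpleGraph.edgeSet_bot, Set.ncard_empty] at hKcard
  simp [← hKcard] at hk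

end FarFromFree

section Cleaning

variable {V : Type*} [Fintype V]

theorem eCnt_mono {G G' : SimpleGraph V} (h : G ≤ G') (A B : Finset V) :
    eCnt G A B ≤ eCnt G' A B :=
  card_le_card <| monotone_filter_right _ fun _ _ hadj ↦ h hadj

theorem eCnt_univ_univ (G : SimpleGraph V) : eCnt G univ univ = 2 * G.edgeSet.ncard := by
  rw [← SimpleGraph.coe_edgeFinset, Set.ncard_coe_finset, SimpleGraph.two_mul_card_edgeFinset,
    eCnt, univ_product_univ]

theorem eCnt_le_of_regPair_of_not_goodPair {G₁ G₂ : SimpleGraph V} {η γ ρ : ℝ} {A B : Finset V}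
    (hγ : 0 < γ) (hρ : 0 ≤ ρ) (hreg : RegPair G₂ η A B) (hbad : ¬GoodPair G₁ G₂ η γ ρ A B) :
    (eCnt G₂ A B : ℝ) ≤ ρ * (#A * #B) + eCnt (G₂ \ G₁) A B / γ := by
  rw [← dens_mul_card_mul_card G₂, ← dens_mul_card_mul_card (G₂ \ G₁), mul_div_right_comm,
    ← add_mul]
  gcongr
  rcases lt_or_ge (dens G₂ A B) ρ with hsparse | hdense
  · linarith [div_nonneg (dens_nonneg (G₂ \ G₁) A B) hγ.le]
  · have hmissing : dens G₂ A B ≤ dens (G₂ \ G₁) A B / γ := by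
      rw [le_div_iff₀' hγ]
      exact (not_le.1 fun h ↦ hbad ⟨hreg, hdense, h⟩).le
    linarith

variable [DecidableEq V] (Z : Finpartition (univ : Finset V))

theorem sum_sum_parts {M : Type*} [AddCommMonoid M] (g : V → V → M) :
    ∑ A ∈ Z.parts, ∑ B ∈ Z.parts, ∑ x ∈ A, ∑ y ∈ B, g x y = ∑ x, ∑ y, g x y := by
  have hparts (f : V → M) : ∑ A ∈ Z.parts, ∑ x ∈ A, f x = ∑ x, f x := by
    have hbiUnion := sum_biUnion (f := f) Z.disjoint
    rwa [Z.biUnion_parts, eq_comm] at hbiUnion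
  simp only [sum_comm (s := Z.parts) (t := (_ : Finset V)), hparts]

theorem sum_eCnt_parts (G : SimpleGraph V) :
    ∑ A ∈ Z.parts, ∑ B ∈ Z.parts, eCnt G A B = 2 * G.edgeSet.ncard := by
  simp only [← eCnt_univ_univ, eCnt_eq_sum, sum_sum_parts]

theorem sum_card_mul_card_parts :
    ∑ A ∈ Z.parts, ∑ B ∈ Z.parts, (#A * #B : ℝ) = (Fintype.card V : ℝ) ^ 2 := by
  rw [← sum_mul_sum, ← Nat.cast_sum, Z.sum_card_parts, card_univ, sq]

variable {Z} {A : Finset V}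

theorem card_part_mul_card_parts_le (hZ : Z.IsEquipartition) (hA : A ∈ Z.parts) :
    #A * #Z.parts ≤ 2 * Fintype.card V := by
  have hle := hZ.card_part_le_average_add_one hA
  have hparts := Z.card_parts_le_card
  rw [card_univ] at hle hparts
  calc #A * #Z.parts ≤ (Fintype.card V / #Z.parts + 1) * #Z.parts := by gcongr
    _ ≤ 2 * Fintype.card V := by linarith [Nat.div_mul_le_self (Fintype.card V) #Z.parts]

theorem card_le_mul_card_part (hZ : Z.IsEquipartition) (hA : A ∈ Z.parts) :
    Fintype.card V ≤ 2 * #Z.parts * #A := by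
  have hle := hZ.average_le_card_part hA
  have hpos : 0 < #Z.parts := card_pos.2 ⟨A, hA⟩
  have hone : 1 ≤ #A := card_pos.2 (Z.nonempty_of_mem_parts hA)
  rw [card_univ] at hle
  calc Fintype.card V ≤ #Z.parts * (Fintype.card V / #Z.parts + 1) :=
        (Nat.lt_mul_div_succ _ hpos).le
    _ ≤ #Z.parts * (2 * #A) := by gcongr; omega
    _ = 2 * #Z.parts * #A := by ring

theorem sum_card_mul_card_not_regPair_le {G : SimpleGraph V} {η : ℝ} (hZ : Z.IsEquipartition)
    (hreg : IsRegularPartition G η Z) :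
    ∑ A ∈ Z.parts, ∑ B ∈ Z.parts, (if RegPair G η A B then 0 else (#A * #B : ℝ)) ≤
      4 * η * (Fintype.card V : ℝ) ^ 2 := by
  rcases Z.parts.eq_empty_or_nonempty with hempty | hne
  · have : Fintype.card V = 0 := by
      simpa [hempty] using (sum_card_mul_card_parts Z).symm
    simp [hempty, this]
  have hk : (0 : ℝ) < (#Z.parts : ℝ) ^ 2 := by have := hne.card_pos; positivity
  have hsize (A) (hA : A ∈ Z.parts) : (#A * #Z.parts : ℝ) ≤ 2 * Fintype.card V :=
    mod_cast card_part_mul_card_parts_le hZ hA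
  refine le_of_mul_le_mul_right ?_ hk
  calc (∑ A ∈ Z.parts, ∑ B ∈ Z.parts, if RegPair G η A B then 0 else (#A * #B : ℝ)) *
        (#Z.parts : ℝ) ^ 2
      = ∑ q ∈ Z.parts ×ˢ Z.parts with ¬RegPair G η q.1 q.2,
          (#q.1 * #Z.parts : ℝ) * (#q.2 * #Z.parts) := by
        rw [← sum_product', sum_mul, sum_filter]
        refine sum_congr rfl fun q _ ↦ ?_
        split_ifs <;> ring
    _ ≤ ∑ q ∈ Z.parts ×ˢ Z.parts with ¬RegPair G η q.1 q.2,
          (2 * Fintype.card V : ℝ) * (2 * Fintype.card V) := by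
        refine sum_le_sum fun q hq ↦ ?_
        have hmem := mem_product.1 (mem_filter.1 hq).1
        exact mul_le_mul (hsize _ hmem.1) (hsize _ hmem.2) (by positivity) (by positivity)
    _ = irregCount G η Z * (2 * Fintype.card V : ℝ) ^ 2 := by
        rw [sum_const, nsmul_eq_mul, sq, irregCount]
    _ ≤ η * #Z.parts ^ 2 * (2 * Fintype.card V : ℝ) ^ 2 := by gcongr; exact hreg
    _ = 4 * η * (Fintype.card V : ℝ) ^ 2 * #Z.parts ^ 2 := by ring

variable {G₁ G₂ : SimpleGraph V} {η γ ρ : ℝ}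

/-- The graph obtained from `G₂` by deleting the edges between parts of `Z` that do not form a
good pair; in particular, edges inside a part `A` survive only if `(A, A)` is good. -/
def cleanedGraph (G₁ G₂ : SimpleGraph V) (η γ ρ : ℝ) (Z : Finpartition (univ : Finset V)) :
    SimpleGraph V where
  Adj u v := G₂.Adj u v ∧ GoodPair G₁ G₂ η γ ρ (Z.part u) (Z.part v)
  symm := ⟨fun _ _ h ↦ ⟨h.1.symm, h.2.symm⟩⟩
  loopless := ⟨fun _ h ↦ h.1.ne rfl⟩

theorem eCnt_sdiff_cleanedGraph_eq_zero {B : Finset V} (hA : A ∈ Z.parts) (hB : B ∈ Z.parts)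
    (hgood : GoodPair G₁ G₂ η γ ρ A B) : eCnt (G₂ \ cleanedGraph G₁ G₂ η γ ρ Z) A B = 0 := by
  rw [eCnt_eq_sum]
  refine sum_eq_zero fun u hu ↦ sum_eq_zero fun v hv ↦ if_neg fun ⟨hadj, hnot⟩ ↦ hnot ⟨hadj, ?_⟩
  rwa [Z.part_eq_of_mem hA hu, Z.part_eq_of_mem hB hv]

theorem ncard_edgeSet_sdiff_cleanedGraph_le (hγ : 0 < γ) (hρ : 0 ≤ ρ) (hZ : Z.IsEquipartition)
    (hreg : IsRegularPartition G₂ η Z) :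
    ((G₂ \ cleanedGraph G₁ G₂ η γ ρ Z).edgeSet.ncard : ℝ) ≤
      (2 * η + ρ / 2) * (Fintype.card V : ℝ) ^ 2 + (G₂ \ G₁).edgeSet.ncard / γ := by
  set D := G₂ \ cleanedGraph G₁ G₂ η γ ρ Z
  have hpair : ∀ A ∈ Z.parts, ∀ B ∈ Z.parts, (eCnt D A B : ℝ) ≤
      (if RegPair G₂ η A B then 0 else (#A * #B : ℝ)) + ρ * (#A * #B) +
        eCnt (G₂ \ G₁) A B / γ := by
    intro A hA B hB
    by_cases hgood : GoodPair G₁ G₂ η γ ρ A B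
    · rw [eCnt_sdiff_cleanedGraph_eq_zero hA hB hgood]
      have : 0 ≤ if RegPair G₂ η A B then 0 else (#A * #B : ℝ) := by split_ifs <;> positivity
      rw [Nat.cast_zero]
      positivity
    refine (Nat.cast_le.2 (eCnt_mono sdiff_le A B)).trans ?_
    split_ifs with hAB
    · simpa using eCnt_le_of_regPair_of_not_goodPair hγ hρ hAB hgood
    · rw [add_assoc]
      exact le_add_of_le_of_nonneg (mod_cast eCnt_le G₂ A B) (by positivity)
  have hsum := sum_le_sum fun A hA ↦ sum_le_sum (hpair A hA)
  have hsparse : ∑ A ∈ Z.parts, ∑ B ∈ Z.parts, ρ * (#A * #B : ℝ) =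
      ρ * (Fintype.card V : ℝ) ^ 2 := by
    simp only [← sum_card_mul_card_parts Z, mul_sum]
  simp only [sum_add_distrib, hsparse, ← sum_div, ← Nat.cast_sum, sum_eCnt_parts] at hsum
  push_cast [mul_div_assoc] at hsum
  linarith [sum_card_mul_card_not_regPair_le hZ hreg]

theorem ncard_edgeSet_sdiff_inf_cleanedGraph_le (hγ : 0 < γ) (hρ : 0 ≤ ρ) (hZ : Z.IsEquipartition)
    (hreg : IsRegularPartition G₂ η Z) :
    ((G₁.edgeSet \ (G₁ ⊓ cleanedGraph G₁ G₂ η γ ρ Z).edgeSet).ncard : ℝ) ≤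
      (symmDiff G₁.edgeSet G₂.edgeSet).ncard * (1 + 1 / γ) +
        (2 * η + ρ / 2) * (Fintype.card V : ℝ) ^ 2 := by
  set K := cleanedGraph G₁ G₂ η γ ρ Z
  have hsub : G₁.edgeSet \ (G₁ ⊓ K).edgeSet ⊆
      symmDiff G₁.edgeSet G₂.edgeSet ∪ (G₂ \ K).edgeSet := by
    rw [SimpleGraph.edgeSet_inf, SimpleGraph.edgeSet_sdiff]
    rintro e ⟨h₁, hK⟩
    by_cases h₂ : e ∈ G₂.edgeSet
    exacts [.inr ⟨h₂, fun h ↦ hK ⟨h₁, h⟩⟩, .inl (.inl ⟨h₁, h₂⟩)]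
  have hlost : (G₁.edgeSet \ (G₁ ⊓ K).edgeSet).ncard ≤
      (symmDiff G₁.edgeSet G₂.edgeSet).ncard + (G₂ \ K).edgeSet.ncard :=
    (Set.ncard_le_ncard hsub).trans (Set.ncard_union_le ..)
  have hextra : ((G₂ \ G₁).edgeSet.ncard : ℝ) ≤ (symmDiff G₁.edgeSet G₂.edgeSet).ncard := by
    rw [SimpleGraph.edgeSet_sdiff]
    exact_mod_cast Set.ncard_le_ncard (Set.subset_union_right)
  calc ((G₁.edgeSet \ (G₁ ⊓ K).edgeSet).ncard : ℝ)
      ≤ (symmDiff G₁.edgeSet G₂.edgeSet).ncard + (G₂ \ K).edgeSet.ncard := mod_cast hlost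
    _ ≤ (symmDiff G₁.edgeSet G₂.edgeSet).ncard + ((2 * η + ρ / 2) * (Fintype.card V : ℝ) ^ 2 +
          (symmDiff G₁.edgeSet G₂.edgeSet).ncard / γ) := by
        gcongr
        exact (ncard_edgeSet_sdiff_cleanedGraph_le hγ hρ hZ hreg).trans (by gcongr)
    _ = _ := by ring

end Cleaning

section Removal

variable {V : Type*} [Fintype V]

theorem le_graphDensity_iff [Nonempty V] {G : SimpleGraph V} {ε : ℝ} :
    ε ≤ graphDensity G ↔ ε * (Fintype.card V : ℝ) ^ 2 ≤ 2 * G.edgeSet.ncard :=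
  le_div_iff₀ (by positivity)

variable [DecidableEq V]

/-- Changing at most a proportion `δ` of the edges of `G` gives a graph with an `η`-regular
equipartition of order at most `S` that refines `P₀`. -/
def HasRegularApprox (G : SimpleGraph V) (P₀ : Finpartition (univ : Finset V)) (δ η : ℝ) (S : ℕ) :
    Prop :=
  ∃ G' : SimpleGraph V, ((symmDiff G.edgeSet G'.edgeSet).ncard : ℝ) ≤ δ * G.edgeSet.ncard ∧
    ∃ Z : Finpartition (univ : Finset V), Z.IsEquipartition ∧ Z ≤ P₀ ∧
      IsRegularPartition G' η Z ∧ #Z.parts ≤ S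

/-- A partition refining the partition into singletons has as many parts as there are vertices. -/
theorem one_div_le_of_hasRegularApprox_top {ε C δ η : ℝ} {S : ℕ} (hε : 0 < ε) (hε2 : ε ≤ 1 / 2)
    (hC : 2 ≤ C)
    (happrox : ∀ m : ℕ, ε ≤ graphDensity (⊤ : SimpleGraph (Fin m)) → (m : ℝ) ≤ ε ^ (-C) →
      HasRegularApprox (⊤ : SimpleGraph (Fin m)) ⊥ δ η S) :
    1 / ε ≤ S := by
  set M := ⌈1 / ε⌉₊
  have hM : 1 / ε ≤ M := Nat.le_ceil _
  have hM' : (M : ℝ) < 1 / ε + 1 := Nat.ceil_lt_add_one (by positivity)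
  have hinv : 2 ≤ 1 / ε := by rw [le_div_iff₀ hε]; linarith
  have hdens : ε ≤ graphDensity (⊤ : SimpleGraph (Fin M)) := by
    have : Nonempty (Fin M) := Fin.pos_iff_nonempty.1 (Nat.ceil_pos.2 (by positivity))
    rw [le_graphDensity_iff, ← SimpleGraph.coe_edgeFinset, Set.ncard_coe_finset,
      SimpleGraph.card_edgeFinset_top_eq_card_choose_two, Fintype.card_fin, Nat.cast_choose_two]
    nlinarith
  have hcard : (M : ℝ) ≤ ε ^ (-C) :=
    calc (M : ℝ) ≤ (1 / ε) ^ 2 := by nlinarith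
      _ = ε ^ (-(2 : ℝ)) := by rw [Real.rpow_neg hε.le, Real.rpow_two, one_div, inv_pow]
      _ ≤ ε ^ (-C) := Real.rpow_le_rpow_of_exponent_ge hε (by linarith) (by linarith)
  obtain ⟨-, -, Z, -, hZ, -, hZS⟩ := happrox M hdens hcard
  have hMS : M ≤ S := by simpa using (Finpartition.card_mono hZ).trans hZS
  exact hM.trans (mod_cast hMS)

section Constants

variable {ε η : ℝ}

/-- The edges lost by cleaning with `γ = 1 / (2k)` and `ρ = ε / (4k)`, where `m = |E(G₁)|`,
`k = |E(H)|`, `N = n²` and `D` edges of `G₁` have been changed. -/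
theorem lost_edges_lt_div {δ k m D N : ℝ} (hk : 1 ≤ k) (hm : 0 < m) (hD : 0 ≤ D)
    (hDm : D ≤ δ * m) (hδ : 32 * k ^ 2 * δ ≤ 1) (hη : 16 * k * η ≤ ε) (hN : 0 ≤ N)
    (hεN : ε * N ≤ m) :
    D * (1 + 1 / (1 / (2 * k))) + (2 * η + ε / (4 * k) / 2) * N < m / k := by
  have hDk : D * k * (1 + 2 * k) ≤ m * (3 / 32) :=
    calc D * k * (1 + 2 * k) ≤ D * k * (3 * k) := by gcongr; linarith
      _ = 3 * k ^ 2 * D := by ring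
      _ ≤ 3 * k ^ 2 * (δ * m) := by gcongr
      _ = 32 * k ^ 2 * δ * m * (3 / 32) := by ring
      _ ≤ 1 * m * (3 / 32) := by gcongr
      _ = m * (3 / 32) := by rw [one_mul]
  have hηN : 16 * k * η * N ≤ ε * N := by gcongr
  have hk' : ε / (4 * k) / 2 * k = ε / 8 := by field_simp; ring
  rw [one_div_one_div, lt_div_iff₀ (by positivity)]
  calc (D * (1 + 2 * k) + (2 * η + ε / (4 * k) / 2) * N) * k
      = D * k * (1 + 2 * k) + 16 * k * η * N / 8 + ε / (4 * k) / 2 * k * N := by ring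
    _ < m := by rw [hk']; linarith

theorem two_mul_pow_le_pow_div_two_sub {k : ℕ} (hε : 0 < ε)
    (hεk : 32 * (k : ℝ) ^ 2 * ε ≤ 1) (hk : k ≠ 0) (hη : η ≤ ε ^ (2 * k + 1)) :
    2 * ε ^ (2 * k + 1) ≤ (ε / (4 * k)) ^ k / 2 - k ^ 2 * η := by
  have hk1 : (1 : ℝ) ≤ k := mod_cast Nat.one_le_iff_ne_zero.2 hk
  have hεk' : k * ε ≤ k ^ 2 * ε := by gcongr; nlinarith
  have hε1 : ε ≤ k * ε := le_mul_of_one_le_left hε.le hk1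
  have hε2 : ε ^ 2 ≤ ε / (4 * k) := by
    rw [le_div_iff₀ (by positivity)]
    nlinarith
  have hmain : ε ^ (2 * k) ≤ (ε / (4 * k)) ^ k := by
    rw [pow_mul]
    gcongr
  have herror : k ^ 2 * η ≤ k ^ 2 * ε * ε ^ (2 * k) := by
    rw [mul_assoc, ← pow_succ']
    gcongr
  have hpow : 0 < ε ^ (2 * k) := by positivity
  rw [pow_succ']
  nlinarith

theorem sixteen_mul_mul_le_of_le_pow {k : ℕ} (hε : 0 < ε)
    (hεk : 32 * (k : ℝ) ^ 2 * ε ≤ 1) (hk : k ≠ 0) (hη : η ≤ ε ^ (2 * k + 1)) : 16 * k * η ≤ ε := by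
  have hk1 : (1 : ℝ) ≤ k := mod_cast Nat.one_le_iff_ne_zero.2 hk
  have hε1 : ε ≤ 1 := by nlinarith
  have hεk' : 16 * k * ε ≤ 32 * k ^ 2 * ε := by gcongr <;> nlinarith
  calc 16 * k * η ≤ 16 * k * ε ^ 2 := by
        gcongr
        exact hη.trans (pow_le_pow_of_le_one hε.le hε1 (by omega))
    _ = 16 * k * ε * ε := by ring
    _ ≤ ε := mul_le_of_le_one_left hε.le (hεk'.trans hεk)

end Constants

section Counting

variable {α : Type*} {H : SimpleGraph α} {G G₁ G₂ : SimpleGraph V}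
  {Z : Finpartition (univ : Finset V)} {ε δ η γ ρ r : ℝ} {S : ℕ}

theorem exists_forall_adj_goodPair (hγ : 0 < γ) (hρ : 0 ≤ ρ) (hZ : Z.IsEquipartition)
    (hreg : IsRegularPartition G₂ η Z) (hfar : G₁.DeleteFar H.Free r)
    (hlost : (symmDiff G₁.edgeSet G₂.edgeSet).ncard * (1 + 1 / γ) +
      (2 * η + ρ / 2) * (Fintype.card V : ℝ) ^ 2 < r) :
    ∃ f : α → V, ∀ a b, H.Adj a b → GoodPair G₁ G₂ η γ ρ (Z.part (f a)) (Z.part (f b)) := by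
  have hcopy : ¬H.Free (G₁ ⊓ cleanedGraph G₁ G₂ η γ ρ Z) := fun hfree ↦
    ((deleteFar_iff_le_ncard_sdiff.1 hfar _ inf_le_left hfree).trans
      (ncard_edgeSet_sdiff_inf_cleanedGraph_le hγ hρ hZ hreg)).not_gt hlost
  obtain ⟨f⟩ := not_not.1 hcopy
  exact ⟨f, fun a b hab ↦ (f.toHom.map_adj hab).2.2⟩

variable [Fintype α]

theorem exists_regularApprox_goodPair [Nonempty V] (hH : H ≠ ⊥) (hε : 0 < ε)
    (hδ : 32 * (#H.edgeFinset : ℝ) ^ 2 * δ ≤ 1) (hη : 16 * #H.edgeFinset * η ≤ ε)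
    (happrox : ∀ G₁ ≤ G, ε ≤ graphDensity G₁ → HasRegularApprox G₁ ⊤ δ η S)
    (hfar : G.DeleteFar H.Free (ε * (Fintype.card V : ℝ) ^ 2)) :
    ∃ G₁ ≤ G, ∃ (G₂ : SimpleGraph V) (Z : Finpartition (univ : Finset V)),
      Z.IsEquipartition ∧ #Z.parts ≤ S ∧ ∃ f : α → V, ∀ a b, H.Adj a b →
        GoodPair G₁ G₂ η (1 / (2 * #H.edgeFinset)) (ε / (4 * #H.edgeFinset))
          (Z.part (f a)) (Z.part (f b)) := by
  have hk : (1 : ℝ) ≤ #H.edgeFinset := by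
    rw [Nat.one_le_cast, one_le_card]
    simpa using hH
  obtain ⟨G₁, hG₁, hfree, hrobust⟩ := exists_le_free_sdiff_and_deleteFar hH G
  have hmany : ε * (Fintype.card V : ℝ) ^ 2 ≤ G₁.edgeSet.ncard := by
    simpa [Set.inter_eq_right.2 (SimpleGraph.edgeSet_mono hG₁)] using
      deleteFar_iff_le_ncard_sdiff.1 hfar _ sdiff_le hfree
  have hpos : (0 : ℝ) < G₁.edgeSet.ncard := hmany.trans_lt' (by positivity)
  obtain ⟨G₂, hclose, Z, hZ, -, hreg, hZS⟩ := happrox G₁ hG₁ (le_graphDensity_iff.2 (by linarith))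
  exact ⟨G₁, hG₁, G₂, Z, hZ, hZS, exists_forall_adj_goodPair (by positivity) (by positivity) hZ hreg
    hrobust (lost_edges_lt_div hk hpos (by positivity) hclose hδ hη (by positivity) hmany)⟩

theorem exists_pow_mul_prod_le_homCount [Nonempty V] (hH : H ≠ ⊥) (hε : 0 < ε)
    (hεk : 32 * (#H.edgeFinset : ℝ) ^ 2 * ε ≤ 1) (hδ : 32 * (#H.edgeFinset : ℝ) ^ 2 * δ ≤ 1)
    (hη : η ≤ ε ^ (2 * #H.edgeFinset + 1))
    (happrox : ∀ G₁ ≤ G, ε ≤ graphDensity G₁ → HasRegularApprox G₁ ⊤ δ η S)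
    (hfar : G.DeleteFar H.Free (ε * (Fintype.card V : ℝ) ^ 2)) :
    ∃ A : α → Finset V, (∀ a, Fintype.card V ≤ 2 * S * #(A a)) ∧
      2 * ε ^ (2 * #H.edgeFinset + 1) * ∏ a, (#(A a) : ℝ) ≤
        homCount A (fun _ ↦ G) H.edgeFinset := by
  have hk : #H.edgeFinset ≠ 0 := by simpa using hH
  have hη' : 16 * #H.edgeFinset * η ≤ ε := sixteen_mul_mul_le_of_le_pow hε hεk hk hη
  obtain ⟨G₁, hG₁, G₂, Z, hZ, hZS, f, hf⟩ :=
    exists_regularApprox_goodPair hH hε hδ hη' happrox hfar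
  have hpart (a) : Z.part (f a) ∈ Z.parts := Z.part_mem.2 (mem_univ _)
  refine ⟨fun a ↦ Z.part (f a), fun a ↦ ?_, ?_⟩
  · calc Fintype.card V ≤ 2 * #Z.parts * #(Z.part (f a)) := card_le_mul_card_part hZ (hpart a)
      _ ≤ 2 * S * #(Z.part (f a)) := by gcongr
  have hcount := homCount_inf_ge (A := fun a ↦ Z.part (f a)) (E := H.edgeFinset)
    (fun a ↦ Z.nonempty_of_mem_parts (hpart a))
    (fun a b hab ↦ have hab := SimpleGraph.mem_edgeFinset.1 hab; ⟨hab.ne, hf a b hab⟩)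
    (by positivity) (by field_simp; rfl)
  calc 2 * ε ^ (2 * #H.edgeFinset + 1) * ∏ a, (#(Z.part (f a)) : ℝ)
      ≤ _ := mul_le_mul_of_nonneg_right
        (two_mul_pow_le_pow_div_two_sub hε hεk hk hη) (by positivity)
    _ ≤ _ := hcount
    _ ≤ _ := mod_cast homCount_mono fun _ _ ↦ inf_le_left.trans hG₁

theorem card_edgeFinset_le_card_sq (H : SimpleGraph α) : #H.edgeFinset ≤ Fintype.card α ^ 2 :=
  H.card_edgeFinset_le_card_choose_two.trans (Nat.choose_le_pow ..)

theorem exists_two_mul_prod_le_pow_mul_homCount [Nonempty V] (hε : 0 < ε)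
    (hεk : 32 * (#H.edgeFinset : ℝ) ^ 2 * ε ≤ 1) (hδ : 32 * (#H.edgeFinset : ℝ) ^ 2 * δ ≤ 1)
    (hη : η ≤ ε ^ (2 * #H.edgeFinset + 1)) (hS : 2 ≤ S) (hεS : 1 / ε ≤ S)
    (happrox : ∀ G₁ ≤ G, ε ≤ graphDensity G₁ → HasRegularApprox G₁ ⊤ δ η S)
    (hfar : G.DeleteFar H.Free (ε * (Fintype.card V : ℝ) ^ 2)) :
    ∃ A : α → Finset V, (∀ a, Fintype.card V ≤ 2 * S * #(A a)) ∧
      2 * ∏ a, (#(A a) : ℝ) ≤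
        S ^ (2 * #H.edgeFinset + 1) * homCount A (fun _ ↦ G) H.edgeFinset := by
  rcases H.edgeFinset.eq_empty_or_nonempty with hempty | hne
  · refine ⟨fun _ ↦ univ, fun _ ↦ ?_, ?_⟩
    · rw [card_univ]
      exact Nat.le_mul_of_pos_left _ (by omega)
    · rw [hempty, homCount_empty, card_empty, mul_zero, zero_add, pow_one,
        Nat.cast_prod]
      gcongr
      exact_mod_cast hS
  obtain ⟨A, hA, hcount⟩ := exists_pow_mul_prod_le_homCount
    (SimpleGraph.edgeFinset_nonempty.1 hne) hε hεk hδ hη happrox hfar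
  refine ⟨A, hA, ?_⟩
  set k := #H.edgeFinset
  calc 2 * ∏ a, (#(A a) : ℝ)
      = (1 / ε * ε) ^ (2 * k + 1) * (2 * ∏ a, (#(A a) : ℝ)) := by
        rw [one_div_mul_cancel hε.ne', one_pow, one_mul]
    _ = (1 / ε) ^ (2 * k + 1) * (2 * ε ^ (2 * k + 1) * ∏ a, (#(A a) : ℝ)) := by ring
    _ ≤ _ := by gcongr

theorem mul_card_edgeFinset_sq_mul_le_one {x : ℝ} (hα : Fintype.card α ≠ 0)
    (hx : x ≤ 1 / (32 * (Fintype.card α : ℝ) ^ 4)) : 32 * (#H.edgeFinset : ℝ) ^ 2 * x ≤ 1 :=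
  calc 32 * (#H.edgeFinset : ℝ) ^ 2 * x
      ≤ 32 * (#H.edgeFinset : ℝ) ^ 2 * (1 / (32 * (Fintype.card α : ℝ) ^ 4)) := by gcongr
    _ ≤ 32 * ((Fintype.card α ^ 2 : ℕ) : ℝ) ^ 2 * (1 / (32 * (Fintype.card α : ℝ) ^ 4)) := by
      gcongr
      exact card_edgeFinset_le_card_sq H
    _ = 1 := by
      push_cast
      field_simp

/-- If `V` is small compared with a power of `S`, a single copy of `H` is enough. -/
theorem pow_div_pow_le_copyCount_of_deleteFar [Nonempty α] {h : ℕ} (hh : Fintype.card α = h)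
    (hε : 0 < ε) (hεh : ε ≤ 1 / (32 * h ^ 4)) (hδh : δ ≤ 1 / (32 * h ^ 4))
    (hη : η ≤ ε ^ (2 * h ^ 2 + 1)) (hεS : 1 / ε ≤ S)
    (happrox : ∀ G₁ ≤ G, ε ≤ graphDensity G₁ → HasRegularApprox G₁ ⊤ δ η S)
    (hfar : G.DeleteFar H.Free (ε * (Fintype.card V : ℝ) ^ 2)) :
    (Fintype.card V : ℝ) ^ h / S ^ (h * (2 * h ^ 2 + 3)) ≤ copyCount H G := by
  have hh0 : Fintype.card α ≠ 0 := Fintype.card_ne_zero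
  subst hh
  set h := Fintype.card α
  rcases isEmpty_or_nonempty V with hV | hV
  · simp [hh0]
  have hh1 : (1 : ℝ) ≤ h := mod_cast Nat.one_le_iff_ne_zero.2 hh0
  have hh4 : (h : ℝ) ^ 2 ≤ h ^ 4 := pow_le_pow_right₀ hh1 (by norm_num)
  have hhS : 32 * (h : ℝ) ^ 4 ≤ S := ((le_one_div (by positivity) hε).2 hεh).trans hεS
  have hS : (2 : ℝ) ≤ S := by nlinarith
  rcases lt_or_ge (Fintype.card V : ℝ) (S ^ (2 * h ^ 2 + 3)) with hsmall | hlarge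
  · calc (Fintype.card V : ℝ) ^ h / S ^ (h * (2 * h ^ 2 + 3)) ≤ 1 := by
          rw [mul_comm, pow_mul]
          exact div_le_one_of_le₀ (by gcongr) (by positivity)
      _ ≤ copyCount H G := mod_cast one_le_copyCount_of_deleteFar hfar (by positivity)
  have hε1 : ε ≤ 1 := hεh.trans (div_le_one_of_le₀ (by nlinarith) (by positivity))
  have hk : #H.edgeFinset ≤ h ^ 2 := card_edgeFinset_le_card_sq H
  obtain ⟨A, hA, hcount⟩ := exists_two_mul_prod_le_pow_mul_homCount hε
    (mul_card_edgeFinset_sq_mul_le_one hh0 hεh) (mul_card_edgeFinset_sq_mul_le_one hh0 hδh)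
    (hη.trans (pow_le_pow_of_le_one hε.le hε1 (by omega))) (mod_cast hS) hεS happrox hfar
  have hexp : 2 * h ^ 2 + 1 + 2 * h ≤ h * (2 * h ^ 2 + 3) := by
    nlinarith [Nat.mul_le_mul_right (2 * h ^ 2 + 1) (Nat.one_le_iff_ne_zero.2 hh0)]
  calc (Fintype.card V : ℝ) ^ h / S ^ (h * (2 * h ^ 2 + 3))
      ≤ (Fintype.card V : ℝ) ^ h / S ^ (2 * h ^ 2 + 1 + 2 * h) := by gcongr; linarith
    _ ≤ (copyCount H G : ℝ) := pow_div_pow_le_copyCount hS (by linarith) hlarge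
      (fun a ↦ mod_cast hA a) (hcount.trans (by gcongr; linarith))

end Counting

end Removal

/-- **The graph removal lemma via SRAL (Theorem 1.2).**
For every `h ≥ 3` there are `ε₀, δ₀, C > 0` such that for every graph `H` on `h` vertices,
every `ε ≤ ε₀` and every `S`: if every graph `G₁` of density at least `ε` together with every
equipartition `P₀` of order at most `ε^{-C}` can be turned, by adding/removing at most
`δ₀|E(G₁)|` edges, into a graph having an `ε^C`-regular equipartition refining `P₀` of order
at most `S`, then every `n`-vertex graph that cannot be made `H`-free by deleting fewer than
`εn²` edges contains at least `n^h / S^C` copies of `H`. -/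
theorem removal_via_sral (h : ℕ) (hh : 3 ≤ h) :
    ∃ ε₀ δ₀ C : ℝ, 0 < ε₀ ∧ 0 < δ₀ ∧ 0 < C ∧
      ∀ (α : Type) (_ : Fintype α) (H : SimpleGraph α), Fintype.card α = h →
      ∀ ε : ℝ, 0 < ε → ε ≤ ε₀ →
      ∀ S : ℕ, 0 < S →
      (∀ (m : ℕ) (G₁ : SimpleGraph (Fin m)),
          ε ≤ graphDensity G₁ →
          ∀ P₀ : Finpartition (univ : Finset (Fin m)), P₀.IsEquipartition →
            (P₀.parts.card : ℝ) ≤ ε ^ (-C) →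
          ∃ G₂ : SimpleGraph (Fin m),
            ((symmDiff G₁.edgeSet G₂.edgeSet).ncard : ℝ) ≤ δ₀ * G₁.edgeSet.ncard ∧
            ∃ Z : Finpartition (univ : Finset (Fin m)), Z.IsEquipartition ∧ Z ≤ P₀ ∧
              IsRegularPartition G₂ (ε ^ C) Z ∧ Z.parts.card ≤ S) →
      ∀ (n : ℕ) (G : SimpleGraph (Fin n)),
        (∀ G' : SimpleGraph (Fin n), G' ≤ G → copyCount H G' = 0 →
          ε * (n : ℝ) ^ 2 ≤ ((G.edgeSet \ G'.edgeSet).ncard : ℝ)) →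
        (n : ℝ) ^ h / (S : ℝ) ^ C ≤ copyCount H G := by
  have hC2 : (2 : ℝ) ≤ (h * (2 * h ^ 2 + 3) : ℕ) := Nat.ofNat_le_cast.2 (by nlinarith)
  refine ⟨1 / (32 * h ^ 4), 1 / (32 * h ^ 4), (h * (2 * h ^ 2 + 3) : ℕ), by positivity,
    by positivity, by positivity, fun α _ H hα ε hε hε₀ S _ happrox n G hfar ↦ ?_⟩
  have : Nonempty α := Fintype.card_pos_iff.1 (by omega)
  have hε2 : ε ≤ 1 / 2 := hε₀.trans <| one_div_le_one_div_of_le two_pos <| by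
    have : (1 : ℝ) ≤ h ^ 4 := one_le_pow₀ (mod_cast (by omega : 1 ≤ h))
    linarith
  have hεS : 1 / ε ≤ S := one_div_le_of_hasRegularApprox_top hε hε2 hC2 fun m hd hm ↦
    happrox m ⊤ hd ⊥ (Finpartition.bot_isEquipartition _) <| by
      rwa [Finpartition.card_bot, card_univ, Fintype.card_fin]
  have hη : ε ^ ((h * (2 * h ^ 2 + 3) : ℕ) : ℝ) ≤ ε ^ (2 * h ^ 2 + 1) :=
    (Real.rpow_natCast ..).trans_le (pow_le_pow_of_le_one hε.le (by linarith) (by nlinarith))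
  have htop : ∀ G₁ ≤ G, ε ≤ graphDensity G₁ → HasRegularApprox G₁ ⊤ _ _ S := fun G₁ _ hd ↦
    happrox n G₁ hd ⊤ (Finpartition.top_isEquipartition _) <|
      (Nat.cast_le_one.2 (card_le_card (Finpartition.parts_top_subset _))).trans <|
        Real.one_le_rpow_of_pos_of_le_one_of_nonpos hε (by linarith)
          (neg_nonpos.2 (Nat.cast_nonneg _))
  have hdelete : G.DeleteFar H.Free (ε * (Fintype.card (Fin n) : ℝ) ^ 2) :=
    deleteFar_iff_le_ncard_sdiff.2 fun G' hG' hfree ↦ by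
      simpa using hfar G' hG' ((copyCount_eq_zero_iff_free H G').2 hfree)
  rw [Real.rpow_natCast]
  simpa using pow_div_pow_le_copyCount_of_deleteFar hα hε hε₀ le_rfl hη hεS htop hdelete
end

section
/- For every ε > 0, every graph G, and every equipartition P₀ of V(G), there exists an equipartition of V(G) refining P₀ that is weak ε-regular and has order at most |P₀| · 2^{16/ε⁵}. -/
/-!
Let `f` be the `0`-`1`-valued adjacency function on `V × V`. The energy of a partition `P` of `V` is
the mean square of the conditional expectation of `f` on the product partition `P × P`; it lies in
`[0, 1]`, and by Pythagoras passing to a refinement increases it by the mean square of the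
difference of the two conditional expectations.

Suppose `S` and `T` witness that `P` is not weak `ε`-regular. Split every part of `P` into
`t = ⌈4 / ε²⌉` nearly equal pieces, so that in the resulting refinement `Q` all but
`|V| / t ≤ (ε / 4) |S|` vertices of `S` lie in pieces contained in `S`, and likewise for `T`. Over
the rectangles of pieces contained in `S × T`, the function `f` has the same sum as its conditional
expectation on `Q × Q`, and discarding the rest of `S × T` costs at most half of the irregularity.
By Cauchy–Schwarz the energy of `Q` therefore exceeds that of `P` by at least `ε⁴ / 4`.

Hence at most `4 / ε⁴` refinements are needed, each multiplying the order by at most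
`t ≤ 2 ^ (4 / ε)`.
-/

open Finset
open scoped Classical

/-- A partition `{V₁,…,V_k}` of the vertex set is weak `ε`-regular if for all disjoint
`S, T ⊆ V` with `|S|, |T| ≥ ε|V|` we have
`Σ_{i,j} (|S ∩ V_i||T ∩ V_j|/(|S||T|))·|d(S ∩ V_i, T ∩ V_j) − d(V_i,V_j)| ≤ ε`. -/
def IsWeakRegular {V : Type*} [Fintype V] [DecidableEq V] (G : SimpleGraph V) (ε : ℝ)
    (P : Finpartition (univ : Finset V)) : Prop :=
  ∀ S T : Finset V, Disjoint S T →
    ε * Fintype.card V ≤ S.card → ε * Fintype.card V ≤ T.card →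
    ∑ U ∈ P.parts, ∑ U' ∈ P.parts,
      ((S ∩ U).card : ℝ) * ((T ∩ U').card : ℝ) / (S.card * T.card) *
        |dens G (S ∩ U) (T ∩ U') - dens G U U'| ≤ ε

open scoped BigOperators

/-! ### Conditional expectation on a partition -/

section PartAverage

variable {α : Type*} [DecidableEq α] {s : Finset α}

/-- The conditional expectation of `f` on the partition `P`: the value at `a` is the mean of `f`
over the part containing `a`. Outside `s` there is no such part and the value is `0`. -/
noncomputable def partAverage (P : Finpartition s) (f : α → ℝ) (a : α) : ℝ :=
  𝔼 b ∈ P.part a, f b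

/-- The largest union of parts of `P` contained in `X`. -/
def innerUnion (P : Finpartition s) (X : Finset α) : Finset α :=
  {C ∈ P.parts | C ⊆ X}.biUnion id

/-- The mean square of the conditional expectation of `f` on `P`. It increases under refinement,
which makes it the potential function of the regularity lemma. -/
noncomputable def partEnergy (P : Finpartition s) (f : α → ℝ) : ℝ :=
  𝔼 a ∈ s, partAverage P f a ^ 2

/-- The total deviation, over the traces of `X` on the parts of `P`, between the sum of `f` and
the sum of its conditional expectation. -/
noncomputable def discrepancy (P : Finpartition s) (f : α → ℝ) (X : Finset α) : ℝ :=
  ∑ C ∈ P.parts, |∑ a ∈ X ∩ C, (f a - partAverage P f a)|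

variable {P Q : Finpartition s} {f : α → ℝ} {X C : Finset α} {a : α}

lemma partAverage_of_mem (hC : C ∈ P.parts) (ha : a ∈ C) : partAverage P f a = 𝔼 b ∈ C, f b := by
  rw [partAverage, P.part_eq_of_mem hC ha]

lemma partAverage_mem_Icc {m M : ℝ} (hf : ∀ a ∈ s, f a ∈ Set.Icc m M) (ha : a ∈ s) :
    partAverage P f a ∈ Set.Icc m M :=
  have hne := P.part_nonempty.2 ha
  ⟨le_expect hne fun b hb => (hf b (P.part_subset a hb)).1,
    expect_le hne fun b hb => (hf b (P.part_subset a hb)).2⟩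

lemma sum_parts_sum_inter (P : Finpartition s) (hX : X ⊆ s) (f : α → ℝ) :
    ∑ C ∈ P.parts, ∑ a ∈ X ∩ C, f a = ∑ a ∈ X, f a := by
  rw [← sum_fiberwise_of_maps_to fun a ha => P.part_mem.2 (hX ha)]
  refine sum_congr rfl fun C hC => sum_congr ?_ fun _ _ => rfl
  ext a
  rw [mem_inter, mem_filter, P.part_eq_iff_mem hC]

lemma sum_parts_sum (P : Finpartition s) (f : α → ℝ) :
    ∑ C ∈ P.parts, ∑ a ∈ C, f a = ∑ a ∈ s, f a := by
  rw [← sum_parts_sum_inter P Subset.rfl]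
  exact sum_congr rfl fun C hC => by rw [inter_eq_right.2 (P.subset hC)]

lemma mem_innerUnion : a ∈ innerUnion P X ↔ a ∈ s ∧ P.part a ⊆ X := by
  simp only [innerUnion, mem_biUnion, mem_filter, id]
  constructor
  · rintro ⟨C, ⟨hC, hCX⟩, ha⟩
    exact ⟨P.subset hC ha, by rwa [P.part_eq_of_mem hC ha]⟩
  · rintro ⟨ha, haX⟩
    exact ⟨P.part a, ⟨P.part_mem.2 ha, haX⟩, P.mem_part ha⟩

lemma innerUnion_subset (P : Finpartition s) (X : Finset α) : innerUnion P X ⊆ X :=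
  biUnion_subset.2 fun _ hC => (mem_filter.1 hC).2

lemma part_subset_iff_mem (hQP : Q ≤ P) (hC : C ∈ P.parts) (ha : a ∈ s) :
    Q.part a ⊆ C ↔ a ∈ C := by
  refine ⟨fun h => h (Q.mem_part ha), fun haC => ?_⟩
  obtain ⟨D, hD, haD⟩ := hQP (Q.part_mem.2 ha)
  rwa [P.eq_of_mem_parts hC hD haC (haD (Q.mem_part ha))]

lemma innerUnion_inter (hQP : Q ≤ P) (hC : C ∈ P.parts) (X : Finset α) :
    innerUnion Q (X ∩ C) = innerUnion Q X ∩ C := by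
  ext a
  simp only [mem_innerUnion, mem_inter, subset_inter_iff, ← and_assoc]
  exact and_congr_right fun ha => part_subset_iff_mem hQP hC ha.1

lemma innerUnion_of_mem_parts (hQP : Q ≤ P) (hC : C ∈ P.parts) : innerUnion Q C = C := by
  ext a
  rw [mem_innerUnion]
  exact ⟨fun h => (part_subset_iff_mem hQP hC h.1).1 h.2,
    fun ha => ⟨P.subset hC ha, (part_subset_iff_mem hQP hC (P.subset hC ha)).2 ha⟩⟩

lemma sum_innerUnion_partAverage (P : Finpartition s) (f : α → ℝ) (X : Finset α) :
    ∑ a ∈ innerUnion P X, partAverage P f a = ∑ a ∈ innerUnion P X, f a := by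
  have hdisj : (({C ∈ P.parts | C ⊆ X} : Finset (Finset α)) : Set (Finset α)).PairwiseDisjoint id :=
    P.disjoint.subset (filter_subset _ _)
  rw [innerUnion, sum_biUnion hdisj, sum_biUnion hdisj]
  refine sum_congr rfl fun C hC => ?_
  rw [id, sum_congr rfl fun a ha => partAverage_of_mem (mem_filter.1 hC).1 ha, sum_const,
    card_smul_expect]

lemma sum_partAverage_of_le (hQP : Q ≤ P) (hC : C ∈ P.parts) (f : α → ℝ) :
    ∑ a ∈ C, partAverage Q f a = ∑ a ∈ C, f a := by
  simpa only [innerUnion_of_mem_parts hQP hC] using sum_innerUnion_partAverage Q f C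

lemma sum_partAverage_sub_mul_partAverage (hQP : Q ≤ P) (f : α → ℝ) :
    ∑ a ∈ s, (partAverage Q f a - partAverage P f a) * partAverage P f a = 0 := by
  rw [← sum_parts_sum P]
  refine sum_eq_zero fun C hC => ?_
  calc ∑ a ∈ C, (partAverage Q f a - partAverage P f a) * partAverage P f a
      = ∑ a ∈ C, (partAverage Q f a - partAverage P f a) * 𝔼 b ∈ C, f b :=
        sum_congr rfl fun a ha => by rw [partAverage_of_mem (P := P) hC ha]
    _ = 0 := by
        rw [← sum_mul, sum_sub_distrib, sum_partAverage_of_le hQP hC,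
          sum_partAverage_of_le le_rfl hC, sub_self, zero_mul]

lemma partEnergy_sub_partEnergy (hQP : Q ≤ P) (f : α → ℝ) :
    partEnergy Q f - partEnergy P f =
      (∑ a ∈ s, (partAverage Q f a - partAverage P f a) ^ 2) / #s := by
  have hsum : ∑ a ∈ s, (partAverage Q f a - partAverage P f a) ^ 2 =
      ∑ a ∈ s, partAverage Q f a ^ 2 - ∑ a ∈ s, partAverage P f a ^ 2 := by
    rw [← sub_zero (∑ a ∈ s, partAverage Q f a ^ 2 - _), ← mul_zero (2 : ℝ),
      ← sum_partAverage_sub_mul_partAverage hQP f, mul_sum, ← sum_sub_distrib, ← sum_sub_distrib]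
    exact sum_congr rfl fun a _ => by ring
  rw [hsum, sub_div, partEnergy, partEnergy, expect_eq_sum_div_card, expect_eq_sum_div_card]

lemma partEnergy_nonneg (P : Finpartition s) (f : α → ℝ) : 0 ≤ partEnergy P f :=
  expect_nonneg fun _ _ => sq_nonneg _

lemma partEnergy_le_one (P : Finpartition s) (hf : ∀ a ∈ s, f a ∈ Set.Icc 0 1) :
    partEnergy P f ≤ 1 := by
  rcases s.eq_empty_or_nonempty with rfl | hs
  · simp [partEnergy]
  · exact expect_le hs fun a ha =>
      pow_le_one₀ (partAverage_mem_Icc hf ha).1 (partAverage_mem_Icc hf ha).2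

/-! ### The energy increment -/

lemma abs_sum_sub_partAverage_inter_le (hQP : Q ≤ P) (hC : C ∈ P.parts)
    (hf : ∀ a ∈ s, f a ∈ Set.Icc 0 1) (X : Finset α) :
    |∑ a ∈ X ∩ C, (f a - partAverage P f a)| ≤
      ∑ a ∈ innerUnion Q X ∩ C, |partAverage Q f a - partAverage P f a| +
        #((X \ innerUnion Q X) ∩ C) := by
  have hsplit : X ∩ C = (X \ innerUnion Q X) ∩ C ∪ innerUnion Q X ∩ C := by
    rw [← union_inter_distrib_right, sdiff_union_of_subset (innerUnion_subset Q X)]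
  have hdisj : Disjoint ((X \ innerUnion Q X) ∩ C) (innerUnion Q X ∩ C) :=
    sdiff_disjoint.mono inter_subset_left inter_subset_left
  have hinner : ∑ a ∈ innerUnion Q X ∩ C, (f a - partAverage P f a) =
      ∑ a ∈ innerUnion Q X ∩ C, (partAverage Q f a - partAverage P f a) := by
    rw [sum_sub_distrib, sum_sub_distrib, ← innerUnion_inter hQP hC, sum_innerUnion_partAverage]
  have houter : |∑ a ∈ (X \ innerUnion Q X) ∩ C, (f a - partAverage P f a)| ≤
      #((X \ innerUnion Q X) ∩ C) := by
    rw [← nsmul_one, ← sum_const]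
    refine (abs_sum_le_sum_abs _ _).trans (sum_le_sum fun a ha => ?_)
    have has : a ∈ s := P.subset hC (mem_inter.1 ha).2
    exact Real.dist_le_of_mem_Icc_01 (hf a has) (partAverage_mem_Icc hf has)
  rw [hsplit, sum_union hdisj, hinner, add_comm]
  exact (abs_add_le _ _).trans (add_le_add (abs_sum_le_sum_abs _ _) houter)

lemma discrepancy_le (hQP : Q ≤ P) (hX : X ⊆ s) (hf : ∀ a ∈ s, f a ∈ Set.Icc 0 1) :
    discrepancy P f X ≤
      ∑ a ∈ innerUnion Q X, |partAverage Q f a - partAverage P f a| + #(X \ innerUnion Q X) := by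
  have hcard : (#(X \ innerUnion Q X) : ℝ) = ∑ C ∈ P.parts, (#((X \ innerUnion Q X) ∩ C) : ℝ) := by
    simpa using (sum_parts_sum_inter P (sdiff_subset.trans hX) fun _ => 1).symm
  rw [hcard, ← sum_parts_sum_inter P ((innerUnion_subset Q X).trans hX), ← sum_add_distrib]
  exact sum_le_sum fun C hC => abs_sum_sub_partAverage_inter_le hQP hC hf X

lemma partEnergy_add_le_of_le_discrepancy {δ : ℝ} (hδ : 0 ≤ δ) (hQP : Q ≤ P) (hX : X ⊆ s)
    (hf : ∀ a ∈ s, f a ∈ Set.Icc 0 1) (hdisc : δ * #X ≤ discrepancy P f X)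
    (hloss : #(X \ innerUnion Q X) ≤ δ / 2 * #X) :
    partEnergy P f + δ ^ 2 / 4 * (#X / #s) ≤ partEnergy Q f := by
  set g : α → ℝ := fun a => partAverage Q f a - partAverage P f a
  have hinner : innerUnion Q X ⊆ X := innerUnion_subset Q X
  have hL1 : δ / 2 * #X ≤ ∑ a ∈ innerUnion Q X, |g a| := by
    linarith [discrepancy_le hQP hX hf]
  have hsq : (δ / 2 * #X) ^ 2 ≤ #X * ∑ a ∈ s, g a ^ 2 :=
    calc (δ / 2 * #X) ^ 2 ≤ (∑ a ∈ innerUnion Q X, |g a|) ^ 2 := by gcongr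
      _ ≤ #(innerUnion Q X) * ∑ a ∈ innerUnion Q X, |g a| ^ 2 := sq_sum_le_card_mul_sum_sq
      _ ≤ #X * ∑ a ∈ s, g a ^ 2 := by
        simp only [sq_abs]
        gcongr
        exact hinner.trans hX
  have hL2 : δ ^ 2 / 4 * #X ≤ ∑ a ∈ s, g a ^ 2 := by
    rcases (Nat.cast_nonneg (α := ℝ) #X).eq_or_lt with h | h
    · rw [← h, mul_zero]
      positivity
    · refine le_of_mul_le_mul_left ?_ h
      linarith
  rw [← le_sub_iff_add_le', partEnergy_sub_partEnergy hQP, ← mul_div_assoc]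
  gcongr

end PartAverage

/-! ### Product partitions -/

section ProductPartition

variable {α β : Type*} [DecidableEq α] [DecidableEq β] {s : Finset α} {t : Finset β}

/-- The partition of `s ×ˢ t` into the products of a part of `P` and a part of `Q`. -/
def productPartition (P : Finpartition s) (Q : Finpartition t) : Finpartition (s ×ˢ t) :=
  .ofExistsUnique ((P.parts ×ˢ Q.parts).image fun C => C.1 ×ˢ C.2)
    (by
      simp only [forall_mem_image, mem_product]
      exact fun C hC => product_subset_product (P.subset hC.1) (Q.subset hC.2))
    (by
      rintro ⟨a, b⟩ hab
      rw [mem_product] at hab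
      refine ⟨P.part a ×ˢ Q.part b, ⟨mem_image.2 ⟨(P.part a, Q.part b), ?_, rfl⟩, ?_⟩, ?_⟩
      · exact mem_product.2 ⟨P.part_mem.2 hab.1, Q.part_mem.2 hab.2⟩
      · exact mem_product.2 ⟨P.mem_part hab.1, Q.mem_part hab.2⟩
      · simp only [and_imp, forall_mem_image, mem_product]
        intro ⟨C, D⟩ hC hD haC hbD
        rw [P.part_eq_of_mem hC haC, Q.part_eq_of_mem hD hbD])
    (by
      rw [mem_image]
      rintro ⟨C, hC, hempty⟩
      obtain ⟨hC₁, hC₂⟩ := mem_product.1 hC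
      exact ((P.nonempty_of_mem_parts hC₁).product (Q.nonempty_of_mem_parts hC₂)).ne_empty hempty)

variable {P P' : Finpartition s} {Q Q' : Finpartition t}

lemma product_mem_productPartition {C : Finset α} {D : Finset β} (hC : C ∈ P.parts)
    (hD : D ∈ Q.parts) : C ×ˢ D ∈ (productPartition P Q).parts :=
  mem_image.2 ⟨(C, D), mem_product.2 ⟨hC, hD⟩, rfl⟩

lemma sum_parts_productPartition (P : Finpartition s) (Q : Finpartition t)
    (F : Finset (α × β) → ℝ) :
    ∑ E ∈ (productPartition P Q).parts, F E = ∑ C ∈ P.parts, ∑ D ∈ Q.parts, F (C ×ˢ D) := by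
  rw [← sum_product']
  refine sum_image fun C hC D hD h => ?_
  obtain ⟨hC₁, hC₂⟩ := mem_product.1 hC
  obtain ⟨a, ha⟩ := P.nonempty_of_mem_parts hC₁
  obtain ⟨b, hb⟩ := Q.nonempty_of_mem_parts hC₂
  have hab : (a, b) ∈ D.1 ×ˢ D.2 := by
    rw [← h]
    exact mem_product.2 ⟨ha, hb⟩
  obtain ⟨hD₁, hD₂⟩ := mem_product.1 hD
  obtain ⟨haD, hbD⟩ := mem_product.1 hab
  exact Prod.ext (P.eq_of_mem_parts hC₁ hD₁ ha haD) (Q.eq_of_mem_parts hC₂ hD₂ hb hbD)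

lemma productPartition_mono (hP : P' ≤ P) (hQ : Q' ≤ Q) :
    productPartition P' Q' ≤ productPartition P Q := by
  intro E hE
  obtain ⟨⟨C', D'⟩, hmem, rfl⟩ := mem_image.1 hE
  obtain ⟨C, hC, hCC⟩ := hP (mem_product.1 hmem).1
  obtain ⟨D, hD, hDD⟩ := hQ (mem_product.1 hmem).2
  exact ⟨C ×ˢ D, product_mem_productPartition hC hD, product_subset_product hCC hDD⟩

lemma innerUnion_product_subset (P : Finpartition s) (Q : Finpartition t) (X : Finset α)
    (Y : Finset β) :
    innerUnion P X ×ˢ innerUnion Q Y ⊆ innerUnion (productPartition P Q) (X ×ˢ Y) := by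
  rintro ⟨a, b⟩ hab
  obtain ⟨⟨ha, haX⟩, hb, hbY⟩ := (mem_product.1 hab).imp mem_innerUnion.1 mem_innerUnion.1
  refine mem_innerUnion.2 ⟨mem_product.2 ⟨ha, hb⟩, ?_⟩
  rw [Finpartition.part_eq_of_mem _
    (product_mem_productPartition (P.part_mem.2 ha) (Q.part_mem.2 hb))
    (mem_product.2 ⟨P.mem_part ha, Q.mem_part hb⟩)]
  exact product_subset_product haX hbY

lemma card_sdiff_innerUnion_product_le (P : Finpartition s) (Q : Finpartition t) (X : Finset α)
    (Y : Finset β) :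
    #((X ×ˢ Y) \ innerUnion (productPartition P Q) (X ×ˢ Y)) ≤
      #(X \ innerUnion P X) * #Y + #X * #(Y \ innerUnion Q Y) := by
  rw [← card_product, ← card_product]
  refine (card_le_card fun p hp => ?_).trans (card_union_le _ _)
  obtain ⟨hpXY, hpin⟩ := mem_sdiff.1 hp
  have hpin' := mt (@innerUnion_product_subset _ _ _ _ _ _ P Q X Y p) hpin
  simp only [mem_union, mem_product, mem_sdiff] at hpXY hpin' ⊢
  tauto

end ProductPartition

/-! ### Equitable refinements -/

section Refinement

variable {α : Type*} [DecidableEq α] {s : Finset α} {𝓕 : Finset (Finset α)}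

lemma inter_mem_parts_atomise (h𝓕 : (𝓕 : Set (Finset α)).PairwiseDisjoint id) {X U : Finset α}
    (hX : X ∈ 𝓕) (hne : (X ∩ U).Nonempty) : X ∩ U ∈ (Finpartition.atomise U 𝓕).parts := by
  refine Finpartition.mem_atomise.2 ⟨hne, {X}, singleton_subset_iff.2 hX, ?_⟩
  ext a
  simp only [mem_filter, mem_inter, mem_singleton, and_comm (a := a ∈ X)]
  refine and_congr_right fun _ => ⟨fun h => (h X hX).1 rfl, fun ha Y hY => ⟨?_, fun haY => ?_⟩⟩
  · rintro rfl
    exact ha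
  · exact h𝓕.elim_finset hY hX a haY ha

lemma exists_finpartition_card_sdiff_innerUnion_le {U : Finset α} {t q : ℕ} (hlow : t * q ≤ #U)
    (hupp : #U ≤ t * (q + 1)) (h𝓕 : (𝓕 : Set (Finset α)).PairwiseDisjoint id) :
    ∃ R : Finpartition U, #R.parts ≤ t ∧ (∀ W ∈ R.parts, #W = q ∨ #W = q + 1) ∧
      ∀ X ∈ 𝓕, #((X ∩ U) \ innerUnion R (X ∩ U)) ≤ q := by
  obtain ⟨b, hb⟩ := Nat.exists_eq_add_of_le hlow
  obtain ⟨a, rfl⟩ : ∃ a, t = a + b := Nat.exists_eq_add_of_le' (by linarith)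
  have hU : a * q + b * (q + 1) = #U := by linarith
  refine ⟨(Finpartition.atomise U 𝓕).equitabilise hU, ?_,
    fun W hW => Finpartition.card_eq_of_mem_parts_equitabilise hW, fun X hX => ?_⟩
  · rcases eq_or_ne q 0 with rfl | hq
    · exact (Finpartition.card_parts_le_card _).trans (by simpa using hupp)
    · exact (Finpartition.card_parts_equitabilise _ hU hq).le
  · rcases (X ∩ U).eq_empty_or_nonempty with hempty | hne
    · simp [hempty]
    · exact Finpartition.card_parts_equitabilise_subset_le _ hU (inter_mem_parts_atomise h𝓕 hX hne)

lemma card_sdiff_innerUnion_bind_le (P : Finpartition s) (R : ∀ U ∈ P.parts, Finpartition U)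
    {X : Finset α} (hX : X ⊆ s) {q : ℕ}
    (hR : ∀ U (hU : U ∈ P.parts), #((X ∩ U) \ innerUnion (R U hU) (X ∩ U)) ≤ q) :
    #(X \ innerUnion (P.bind R) X) ≤ #P.parts * q := by
  have hinner : ∀ U (hU : U ∈ P.parts),
      innerUnion (R U hU) (X ∩ U) ⊆ innerUnion (P.bind R) X := by
    intro U hU
    refine biUnion_subset_biUnion_of_subset_left _ fun W hW => ?_
    obtain ⟨hWR, hWX⟩ := mem_filter.1 hW
    exact mem_filter.2 ⟨Finpartition.mem_bind.2 ⟨U, hU, hWR⟩, hWX.trans inter_subset_left⟩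
  have hcover : X \ innerUnion (P.bind R) X ⊆
      P.parts.biUnion fun U => (X \ innerUnion (P.bind R) X) ∩ U := by
    intro a ha
    obtain ⟨U, hU, haU⟩ := P.exists_mem (hX (mem_sdiff.1 ha).1)
    exact mem_biUnion.2 ⟨U, hU, mem_inter.2 ⟨ha, haU⟩⟩
  refine (card_le_card hcover).trans (card_biUnion_le_card_mul _ _ _ fun U hU => ?_)
  rw [sdiff_inter_right_comm]
  exact (card_le_card (sdiff_subset_sdiff Subset.rfl (hinner U hU))).trans (hR U hU)

lemma exists_equipartition_le_card_sdiff_innerUnion_le {P : Finpartition s}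
    (hP : P.IsEquipartition) {t : ℕ} (ht : 0 < t)
    (h𝓕 : (𝓕 : Set (Finset α)).PairwiseDisjoint id) (h𝓕s : ∀ X ∈ 𝓕, X ⊆ s) :
    ∃ Q : Finpartition s, Q.IsEquipartition ∧ Q ≤ P ∧ #Q.parts ≤ #P.parts * t ∧
      ∀ X ∈ 𝓕, t * #(X \ innerUnion Q X) ≤ #s := by
  set m := #s / #P.parts
  have hlow : t * (m / t) ≤ m := Nat.mul_div_le m t
  have hupp : m + 1 ≤ t * (m / t + 1) := Nat.lt_mul_div_succ m ht
  choose! R hRcard hRsize hRloss using fun U (hU : U ∈ P.parts) =>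
    exists_finpartition_card_sdiff_innerUnion_le (hlow.trans (hP.average_le_card_part hU))
      ((hP.card_part_le_average_add_one hU).trans hupp) h𝓕
  refine ⟨P.bind fun U _ => R U, ?_, fun W hW => ?_, ?_, fun X hX => ?_⟩
  · refine Set.equitableOn_iff_exists_eq_eq_add_one.2 ⟨m / t, fun W hW => ?_⟩
    obtain ⟨U, hU, hWU⟩ := Finpartition.mem_bind.1 (mem_coe.1 hW)
    exact hRsize U hU W hWU
  · obtain ⟨U, hU, hWU⟩ := Finpartition.mem_bind.1 hW
    exact ⟨U, hU, (R U).subset hWU⟩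
  · rw [Finpartition.card_bind, ← smul_eq_mul, ← card_attach]
    exact sum_le_card_nsmul _ _ _ fun U _ => hRcard U U.2
  · calc t * #(X \ innerUnion (P.bind fun U _ => R U) X) ≤ t * (#P.parts * (m / t)) := by
          gcongr
          exact card_sdiff_innerUnion_bind_le P _ (h𝓕s X hX) fun U hU => hRloss U hU X hX
      _ = #P.parts * (t * (m / t)) := by ring
      _ ≤ #P.parts * m := by gcongr
      _ ≤ #s := Nat.mul_div_le _ _

end Refinement

/-! ### Weak regularity of graphs -/

section Graph

variable {V : Type*}

/-- The adjacency relation of `G` as a `0`-`1`-valued function on pairs of vertices; its means over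
rectangles are the edge densities. -/
noncomputable def adjIndicator (G : SimpleGraph V) (p : V × V) : ℝ :=
  if G.Adj p.1 p.2 then 1 else 0

lemma adjIndicator_mem_Icc (G : SimpleGraph V) (p : V × V) : adjIndicator G p ∈ Set.Icc 0 1 := by
  unfold adjIndicator
  split_ifs <;> simp

variable [Fintype V] (G : SimpleGraph V)

lemma dens_eq_expect_adjIndicator (A B : Finset V) :
    dens G A B = 𝔼 p ∈ A ×ˢ B, adjIndicator G p := by
  simp only [_root_.dens, eCnt, adjIndicator, expect_eq_sum_div_card, sum_boole, card_product,
    Nat.cast_mul]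

variable [DecidableEq V]

/-- The energy of a vertex partition: the mean square of the edge density between the parts of two
vertices chosen uniformly at random. -/
noncomputable def vertexEnergy (P : Finpartition (univ : Finset V)) : ℝ :=
  partEnergy (productPartition P P) (adjIndicator G)

variable {G} {P : Finpartition (univ : Finset V)} {ε : ℝ}

lemma card_mul_card_mul_dens_sub_dens {A B C D : Finset V} (hC : C ∈ P.parts) (hD : D ∈ P.parts)
    (hA : A ⊆ C) (hB : B ⊆ D) :
    #A * #B * (dens G A B - dens G C D) =
      ∑ p ∈ A ×ˢ B, (adjIndicator G p - partAverage (productPartition P P) (adjIndicator G) p) := by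
  have haverage : ∀ p ∈ A ×ˢ B,
      partAverage (productPartition P P) (adjIndicator G) p = dens G C D := fun p hp => by
    rw [partAverage_of_mem (product_mem_productPartition hC hD) (product_subset_product hA hB hp),
      dens_eq_expect_adjIndicator]
  rw [sum_sub_distrib, sum_congr rfl haverage, sum_const, nsmul_eq_mul, ← card_mul_expect,
    ← dens_eq_expect_adjIndicator, ← mul_sub, card_product, Nat.cast_mul]

lemma sum_abs_dens_sub_dens_eq_discrepancy_div (S T : Finset V) :
    ∑ U ∈ P.parts, ∑ U' ∈ P.parts,
      (#(S ∩ U) : ℝ) * #(T ∩ U') / (#S * #T) * |dens G (S ∩ U) (T ∩ U') - dens G U U'| =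
    discrepancy (productPartition P P) (adjIndicator G) (S ×ˢ T) / (#S * #T) := by
  rw [discrepancy, sum_parts_productPartition]
  simp_rw [sum_div]
  refine sum_congr rfl fun U hU => sum_congr rfl fun U' hU' => ?_
  rw [product_inter_product,
    ← card_mul_card_mul_dens_sub_dens hU hU' inter_subset_right inter_subset_right, abs_mul,
    abs_mul, Nat.abs_cast, Nat.abs_cast, div_mul_eq_mul_div]

lemma exists_lt_discrepancy_of_not_isWeakRegular (hε : 0 ≤ ε) (hP : ¬ IsWeakRegular G ε P) :
    ∃ S T : Finset V, Disjoint S T ∧ ε * Fintype.card V ≤ #S ∧ ε * Fintype.card V ≤ #T ∧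
      S.Nonempty ∧
      ε * (#S * #T) < discrepancy (productPartition P P) (adjIndicator G) (S ×ˢ T) := by
  simp only [IsWeakRegular, not_forall, not_le, sum_abs_dens_sub_dens_eq_discrepancy_div] at hP
  obtain ⟨S, T, hdisj, hS, hT, hST⟩ := hP
  have hne : (#S * #T : ℝ) ≠ 0 := by
    intro h
    rw [h, div_zero] at hST
    exact hST.not_ge hε
  have hSne : S.Nonempty := by
    rw [nonempty_iff_ne_empty]
    rintro rfl
    simp at hne
  exact ⟨S, T, hdisj, hS, hT, hSne, (lt_div_iff₀ (by positivity)).1 hST⟩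

lemma vertexEnergy_add_le {Q : Finpartition (univ : Finset V)} (hQP : Q ≤ P) (hε : 0 ≤ ε)
    {S T : Finset V} (hS : ε * Fintype.card V ≤ #S) (hT : ε * Fintype.card V ≤ #T)
    (hSne : S.Nonempty)
    (hdisc : ε * (#S * #T) ≤ discrepancy (productPartition P P) (adjIndicator G) (S ×ˢ T))
    (hSloss : #(S \ innerUnion Q S) ≤ ε / 4 * #S) (hTloss : #(T \ innerUnion Q T) ≤ ε / 4 * #T) :
    vertexEnergy G P + ε ^ 4 / 4 ≤ vertexEnergy G Q := by
  have hcard : (#(S ×ˢ T) : ℝ) = #S * #T := by rw [card_product, Nat.cast_mul]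
  have hloss : (#((S ×ˢ T) \ innerUnion (productPartition Q Q) (S ×ˢ T)) : ℝ) ≤
      ε / 2 * #(S ×ˢ T) :=
    calc (#((S ×ˢ T) \ innerUnion (productPartition Q Q) (S ×ˢ T)) : ℝ)
        ≤ #(S \ innerUnion Q S) * #T + #S * #(T \ innerUnion Q T) :=
          mod_cast card_sdiff_innerUnion_product_le Q Q S T
      _ ≤ ε / 4 * #S * #T + #S * (ε / 4 * #T) := by gcongr
      _ = ε / 2 * #(S ×ˢ T) := by rw [hcard]; ring
  have hsize : ε ^ 2 ≤ #(S ×ˢ T) / #(univ ×ˢ univ : Finset (V × V)) := by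
    have hV : 0 < Fintype.card V := hSne.card_pos.trans_le S.card_le_univ
    rw [hcard, card_product, card_univ, Nat.cast_mul, le_div_iff₀ (by positivity)]
    calc ε ^ 2 * (Fintype.card V * Fintype.card V)
        = ε * Fintype.card V * (ε * Fintype.card V) := by ring
      _ ≤ #S * #T := by gcongr
  calc vertexEnergy G P + ε ^ 4 / 4 = vertexEnergy G P + ε ^ 2 / 4 * ε ^ 2 := by ring
    _ ≤ vertexEnergy G P + ε ^ 2 / 4 * (#(S ×ˢ T) / #(univ ×ˢ univ : Finset (V × V))) := by gcongr
    _ ≤ vertexEnergy G Q :=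
      partEnergy_add_le_of_le_discrepancy hε (productPartition_mono hQP hQP)
        (product_subset_product (subset_univ S) (subset_univ T))
        (fun p _ => adjIndicator_mem_Icc G p) (by rwa [hcard]) hloss

lemma exists_equipartition_vertexEnergy_add_le (hP : P.IsEquipartition) (hε : 0 < ε)
    (hreg : ¬ IsWeakRegular G ε P) :
    ∃ Q : Finpartition (univ : Finset V), Q.IsEquipartition ∧ Q ≤ P ∧
      #Q.parts ≤ #P.parts * ⌈4 / ε ^ 2⌉₊ ∧ vertexEnergy G P + ε ^ 4 / 4 ≤ vertexEnergy G Q := by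
  obtain ⟨S, T, hdisj, hS, hT, hSne, hdisc⟩ :=
    exists_lt_discrepancy_of_not_isWeakRegular hε.le hreg
  set t := ⌈4 / ε ^ 2⌉₊
  have ht : 0 < t := Nat.ceil_pos.2 (by positivity)
  have hfamily : (({S, T} : Finset (Finset V)) : Set (Finset V)).PairwiseDisjoint id := by
    rw [coe_pair]
    exact Set.pairwise_pair.2 fun _ => ⟨hdisj, hdisj.symm⟩
  obtain ⟨Q, hQ, hQP, hcard, hloss⟩ :=
    exists_equipartition_le_card_sdiff_innerUnion_le hP ht hfamily fun X _ => subset_univ X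
  have hloss' : ∀ X ∈ ({S, T} : Finset (Finset V)), ε * Fintype.card V ≤ #X →
      #(X \ innerUnion Q X) ≤ ε / 4 * #X := fun X hX hlarge =>
    calc (#(X \ innerUnion Q X) : ℝ) ≤ Fintype.card V / t := by
          rw [le_div_iff₀' (by positivity)]
          exact_mod_cast hloss X hX
      _ ≤ Fintype.card V / (4 / ε ^ 2) := by
          gcongr
          exact Nat.le_ceil _
      _ = ε / 4 * (ε * Fintype.card V) := by field_simp
      _ ≤ ε / 4 * #X := by gcongr
  exact ⟨Q, hQ, hQP, hcard, vertexEnergy_add_le hQP hε.le hS hT hSne hdisc.le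
    (hloss' S (by simp) hS) (hloss' T (by simp) hT)⟩

lemma exists_isWeakRegular_of_one_lt_vertexEnergy_add (hε : 0 < ε) (k : ℕ)
    (hP : P.IsEquipartition) (henergy : 1 < vertexEnergy G P + (k + 1) * (ε ^ 4 / 4)) :
    ∃ Q : Finpartition (univ : Finset V), Q.IsEquipartition ∧ Q ≤ P ∧ IsWeakRegular G ε Q ∧
      #Q.parts ≤ #P.parts * ⌈4 / ε ^ 2⌉₊ ^ k := by
  induction k generalizing P with
  | zero =>
    refine ⟨P, hP, le_rfl, by_contra fun hreg => ?_, by simp⟩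
    obtain ⟨Q, -, -, -, hgain⟩ := exists_equipartition_vertexEnergy_add_le hP hε hreg
    have hQ : vertexEnergy G Q ≤ 1 := partEnergy_le_one _ fun p _ => adjIndicator_mem_Icc G p
    push_cast at henergy
    linarith
  | succ k ih =>
    by_cases hreg : IsWeakRegular G ε P
    · have ht : 0 < ⌈4 / ε ^ 2⌉₊ := Nat.ceil_pos.2 (by positivity)
      exact ⟨P, hP, le_rfl, hreg, Nat.le_mul_of_pos_right _ (pow_pos ht _)⟩
    obtain ⟨P', hP', hP'P, hcard, hgain⟩ := exists_equipartition_vertexEnergy_add_le hP hε hreg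
    push_cast at henergy
    obtain ⟨Q, hQ, hQP', hreg', hcard'⟩ := ih hP' (by linarith)
    refine ⟨Q, hQ, hQP'.trans hP'P, hreg', ?_⟩
    calc #Q.parts ≤ #P'.parts * ⌈4 / ε ^ 2⌉₊ ^ k := hcard'
      _ ≤ #P.parts * ⌈4 / ε ^ 2⌉₊ * ⌈4 / ε ^ 2⌉₊ ^ k := by gcongr
      _ = #P.parts * ⌈4 / ε ^ 2⌉₊ ^ (k + 1) := by ring

variable (G) in
theorem weak_regularity_lemma_general (hε : 0 < ε) (hP : P.IsEquipartition) :
    ∃ Q : Finpartition (univ : Finset V), Q.IsEquipartition ∧ Q ≤ P ∧ IsWeakRegular G ε Q ∧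
      #Q.parts ≤ #P.parts * ⌈4 / ε ^ 2⌉₊ ^ ⌊4 / ε ^ 4⌋₊ := by
  refine exists_isWeakRegular_of_one_lt_vertexEnergy_add hε _ hP ?_
  have hsteps : 1 < (⌊4 / ε ^ 4⌋₊ + 1) * (ε ^ 4 / 4) :=
    calc 1 = 4 / ε ^ 4 * (ε ^ 4 / 4) := by field_simp
      _ < (⌊4 / ε ^ 4⌋₊ + 1) * (ε ^ 4 / 4) := by
        gcongr
        exact Nat.lt_floor_add_one _
  have henergy : 0 ≤ vertexEnergy G P := partEnergy_nonneg _ _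
  linarith

end Graph

/-! ### The size of the bound -/

lemma one_add_sq_le_four_rpow {x : ℝ} (hx : 0 ≤ x) : 1 + x ^ 2 ≤ 4 ^ x := by
  rcases le_total x 1 with hx1 | hx1
  · calc 1 + x ^ 2 ≤ x + 1 := by nlinarith
      _ ≤ Real.exp x := Real.add_one_le_exp x
      _ = Real.exp 1 ^ x := (Real.exp_one_rpow x).symm
      _ ≤ 4 ^ x := by
        gcongr
        exact (Real.exp_one_lt_three.trans (by norm_num)).le
  · calc 1 + x ^ 2 ≤ (1 + x * 1) ^ 2 := by nlinarith
      _ ≤ ((1 + 1) ^ x) ^ 2 := by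
        gcongr
        exact one_add_mul_self_le_rpow_one_add (by norm_num) hx1
      _ = 4 ^ x := by
        rw [sq, ← Real.mul_rpow (by norm_num) (by norm_num)]
        norm_num

lemma ceil_pow_floor_le_two_rpow {ε : ℝ} (hε : 0 < ε) :
    (⌈4 / ε ^ 2⌉₊ : ℝ) ^ ⌊4 / ε ^ 4⌋₊ ≤ 2 ^ (16 / ε ^ 5) := by
  have hceil : (⌈4 / ε ^ 2⌉₊ : ℝ) ≤ 2 ^ (4 / ε) :=
    calc (⌈4 / ε ^ 2⌉₊ : ℝ) ≤ 4 / ε ^ 2 + 1 := (Nat.ceil_lt_add_one (by positivity)).le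
      _ = 1 + (2 / ε) ^ 2 := by ring
      _ ≤ 4 ^ (2 / ε) := one_add_sq_le_four_rpow (by positivity)
      _ = 2 ^ (4 / ε) := by
        rw [show (4 : ℝ) = 2 ^ (2 : ℝ) by norm_num, ← Real.rpow_mul (by norm_num)]
        norm_num [mul_div_assoc']
  calc (⌈4 / ε ^ 2⌉₊ : ℝ) ^ ⌊4 / ε ^ 4⌋₊ ≤ (2 ^ (4 / ε)) ^ ⌊4 / ε ^ 4⌋₊ := by gcongr
    _ = 2 ^ (4 / ε * ⌊4 / ε ^ 4⌋₊) := by rw [Real.rpow_mul_natCast (by norm_num)]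
    _ ≤ 2 ^ (4 / ε * (4 / ε ^ 4)) := by
      gcongr
      · norm_num
      · exact Nat.floor_le (by positivity)
    _ = 2 ^ (16 / ε ^ 5) := by
      congr 1
      field_simp
      norm_num

/-- **The (stronger) weak regularity lemma (Theorem 2.3).**
For every `ε > 0`, every graph `G` and every equipartition `P₀` of `V(G)`, there is a weak
`ε`-regular equipartition refining `P₀` of order at most `|P₀| · 2^{16/ε⁵}`. -/
theorem weak_regularity_lemma (ε : ℝ) (hε : 0 < ε)
    (V : Type) [Fintype V] [DecidableEq V] (G : SimpleGraph V)
    (P₀ : Finpartition (univ : Finset V)) (hP₀ : P₀.IsEquipartition) :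
    ∃ Q : Finpartition (univ : Finset V), Q.IsEquipartition ∧ Q ≤ P₀ ∧
      IsWeakRegular G ε Q ∧
      (Q.parts.card : ℝ) ≤ (P₀.parts.card : ℝ) * 2 ^ ((16 : ℝ) / ε ^ 5) := by
  obtain ⟨Q, hQ, hQP₀, hreg, hcard⟩ := weak_regularity_lemma_general G hε hP₀
  refine ⟨Q, hQ, hQP₀, hreg, ?_⟩
  calc (#Q.parts : ℝ) ≤ #P₀.parts * (⌈4 / ε ^ 2⌉₊ : ℝ) ^ ⌊4 / ε ^ 4⌋₊ := mod_cast hcard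
    _ ≤ #P₀.parts * 2 ^ (16 / ε ^ 5) := by
      gcongr
      exact ceil_pow_floor_le_two_rpow hε
end

section
/- Let d₁,…,d_N, p₁,…,p_N ≥ 0 be real numbers with Σ_{i=1}^N p_i = 1 and d := Σ_{i=1}^N p_i d_i ≠ 0. Then Σ_{i=1}^N p_i H(d_i) − H(d) ≥ (1/2) · d · (Σ_{i=1}^N p_i |d_i/d − 1|)², where H(x) = x ln x (with 0 ln 0 = 0). -/
open Finset

/-!
Rescaled by the mean `m`, the claim becomes Pinsker's inequality for the density `x i = d i / m`.
That inequality follows by Cauchy–Schwarz from the pointwise bound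
`(x - 1) ^ 2 ≤ (2 * x + 4) / 3 * klFun x`, where `klFun x = x * log x + 1 - x`: the first factor
sums to twice the total mass, and the affine correction `1 - x` sums to zero.
For the pointwise bound, `(2 * x + 4) * klFun x - 3 * (x - 1) ^ 2` is convex with a critical zero
at `x = 1`; convexity is the inequality `1 - x⁻¹ ≤ log x`.
-/

section Pointwise

open Set Real InformationTheory

lemma hasDerivAt_mul_klFun_sub_sq {x : ℝ} (hx : x ≠ 0) :
    HasDerivAt (fun y ↦ (2 * y + 4) * klFun y - 3 * (y - 1) ^ 2)
      (4 * ((x + 1) * log x - 2 * (x - 1))) x := by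
  have hlin : HasDerivAt (fun y : ℝ ↦ 2 * y + 4) 2 x := by
    simpa using ((hasDerivAt_id' x).const_mul 2).add_const 4
  have hsq : HasDerivAt (fun y : ℝ ↦ 3 * (y - 1) ^ 2) (6 * (x - 1)) x :=
    ((((hasDerivAt_id' x).sub_const 1).pow 2).const_mul 3).congr_deriv (by ring)
  exact ((hlin.mul (hasDerivAt_klFun hx)).sub hsq).congr_deriv (by rw [klFun_apply]; ring)

lemma hasDerivAt_add_one_mul_log_sub {x : ℝ} (hx : x ≠ 0) :
    HasDerivAt (fun y ↦ 4 * ((y + 1) * log y - 2 * (y - 1))) (4 * (log x - (1 - x⁻¹))) x := by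
  have hmul : HasDerivAt (fun y ↦ (y + 1) * log y) (1 * log x + (x + 1) * x⁻¹) x :=
    ((hasDerivAt_id' x).add_const 1).mul (hasDerivAt_log hx)
  have hlin : HasDerivAt (fun y : ℝ ↦ 2 * (y - 1)) (2 * 1) x :=
    ((hasDerivAt_id' x).sub_const 1).const_mul 2
  exact ((hmul.sub hlin).const_mul 4).congr_deriv (by field_simp; ring)

lemma convexOn_mul_klFun_sub_sq :
    ConvexOn ℝ (Ici 0) fun x ↦ (2 * x + 4) * klFun x - 3 * (x - 1) ^ 2 := by
  have hpos : ∀ x ∈ interior (Ici (0 : ℝ)), 0 < x := fun x hx ↦ by rwa [interior_Ici] at hx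
  exact convexOn_of_hasDerivWithinAt2_nonneg (convex_Ici 0) (by fun_prop)
    (fun x hx ↦ (hasDerivAt_mul_klFun_sub_sq (hpos x hx).ne').hasDerivWithinAt)
    (fun x hx ↦ (hasDerivAt_add_one_mul_log_sub (hpos x hx).ne').hasDerivWithinAt)
    (fun x hx ↦ mul_nonneg zero_le_four (sub_nonneg.2 (one_sub_inv_le_log_of_pos (hpos x hx))))

lemma three_mul_sq_sub_one_le_mul_klFun {x : ℝ} (hx : 0 ≤ x) :
    3 * (x - 1) ^ 2 ≤ (2 * x + 4) * klFun x := by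
  have hderiv : HasDerivAt (fun y ↦ (2 * y + 4) * klFun y - 3 * (y - 1) ^ 2) 0 1 := by
    simpa using hasDerivAt_mul_klFun_sub_sq one_ne_zero
  have hmin := convexOn_mul_klFun_sub_sq.isMinOn_of_rightDeriv_eq_zero (x := 1) (by simp)
    (hderiv.hasDerivWithinAt.derivWithin (uniqueDiffWithinAt_Ioi 1))
  simpa [klFun_one] using isMinOn_iff.1 hmin x hx

lemma mul_klFun_div {c : ℝ} (hc : c ≠ 0) (x : ℝ) :
    c * klFun (x / c) = x * log x - x * log c + c - x := by
  obtain rfl | hx := eq_or_ne x 0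
  · simp [klFun_zero]
  · rw [klFun_apply, log_div hx hc]
    field_simp

end Pointwise

section WeightedSums

open InformationTheory

variable {ι : Type*} {s : Finset ι} {p : ι → ℝ}

lemma sq_sum_mul_abs_sub_one_le_mul_sum_klFun {x : ι → ℝ} (hp : ∀ i ∈ s, 0 ≤ p i)
    (hx : ∀ i ∈ s, 0 ≤ x i) :
    (∑ i ∈ s, p i * |x i - 1|) ^ 2 ≤
      (∑ i ∈ s, p i * ((2 * x i + 4) / 3)) * ∑ i ∈ s, p i * klFun (x i) := by
  refine sum_sq_le_sum_mul_sum_of_sq_le_mul s (fun i hi ↦ ?_)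
    (fun i hi ↦ mul_nonneg (hp i hi) (klFun_nonneg (hx i hi))) fun i hi ↦ ?_
  · have := hx i hi
    exact mul_nonneg (hp i hi) (by positivity)
  · calc (p i * |x i - 1|) ^ 2 = p i ^ 2 / 3 * (3 * (x i - 1) ^ 2) := by
          rw [mul_pow, sq_abs]; ring
      _ ≤ p i ^ 2 / 3 * ((2 * x i + 4) * klFun (x i)) := by
          exact mul_le_mul_of_nonneg_left (three_mul_sq_sub_one_le_mul_klFun (hx i hi))
            (by positivity)
      _ = p i * ((2 * x i + 4) / 3) * (p i * klFun (x i)) := by ring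

lemma sq_sum_mul_abs_sub_one_le_of_mean_one {x : ι → ℝ} (hp : ∀ i ∈ s, 0 ≤ p i)
    (hx : ∀ i ∈ s, 0 ≤ x i) (hmean : ∑ i ∈ s, p i * x i = ∑ i ∈ s, p i) :
    (∑ i ∈ s, p i * |x i - 1|) ^ 2 ≤ 2 * (∑ i ∈ s, p i) * ∑ i ∈ s, p i * klFun (x i) := by
  have hmass : ∑ i ∈ s, p i * ((2 * x i + 4) / 3) = 2 * ∑ i ∈ s, p i := by
    calc ∑ i ∈ s, p i * ((2 * x i + 4) / 3)
        = ∑ i ∈ s, (2 / 3 * (p i * x i) + 4 / 3 * p i) := sum_congr rfl fun i _ ↦ by ring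
      _ = 2 / 3 * ∑ i ∈ s, p i * x i + 4 / 3 * ∑ i ∈ s, p i := by
          rw [sum_add_distrib, mul_sum, mul_sum]
      _ = 2 * ∑ i ∈ s, p i := by rw [hmean]; ring
  simpa only [hmass] using sq_sum_mul_abs_sub_one_le_mul_sum_klFun hp hx

lemma mul_sum_mul_klFun_div {d : ι → ℝ} {m : ℝ} (hm : m ≠ 0)
    (hmean : ∑ i ∈ s, p i * d i = m * ∑ i ∈ s, p i) :
    m * ∑ i ∈ s, p i * klFun (d i / m) =
      ∑ i ∈ s, p i * (d i * Real.log (d i)) - (∑ i ∈ s, p i * d i) * Real.log m := by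
  calc m * ∑ i ∈ s, p i * klFun (d i / m)
      = ∑ i ∈ s, (p i * (d i * Real.log (d i)) - p i * d i * Real.log m +
          (m * p i - p i * d i)) := by
        rw [mul_sum]
        refine sum_congr rfl fun i _ ↦ ?_
        rw [mul_left_comm, mul_klFun_div hm]
        ring
    _ = ∑ i ∈ s, p i * (d i * Real.log (d i)) - (∑ i ∈ s, p i * d i) * Real.log m +
          (m * ∑ i ∈ s, p i - ∑ i ∈ s, p i * d i) := by
        simp only [sum_add_distrib, sum_sub_distrib, sum_mul, mul_sum]
    _ = _ := by rw [hmean, sub_self, add_zero]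

theorem entropy_defect_general {d : ι → ℝ} {m : ℝ} (hd : ∀ i ∈ s, 0 ≤ d i)
    (hp : ∀ i ∈ s, 0 ≤ p i) (hm : 0 < m) (hmean : ∑ i ∈ s, p i * d i = m * ∑ i ∈ s, p i) :
    (1 / 2) * m * (∑ i ∈ s, p i * |d i / m - 1|) ^ 2 ≤
      (∑ i ∈ s, p i) *
        (∑ i ∈ s, p i * (d i * Real.log (d i)) - (∑ i ∈ s, p i * d i) * Real.log m) := by
  have hmean_div : ∑ i ∈ s, p i * (d i / m) = ∑ i ∈ s, p i := by
    simp_rw [← mul_div_assoc]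
    rw [← sum_div, hmean, mul_div_cancel_left₀ _ hm.ne']
  calc (1 / 2) * m * (∑ i ∈ s, p i * |d i / m - 1|) ^ 2
      ≤ (1 / 2) * m * (2 * (∑ i ∈ s, p i) * ∑ i ∈ s, p i * klFun (d i / m)) := by
        gcongr
        exact sq_sum_mul_abs_sub_one_le_of_mean_one hp
          (fun i hi ↦ div_nonneg (hd i hi) hm.le) hmean_div
    _ = (∑ i ∈ s, p i) * (m * ∑ i ∈ s, p i * klFun (d i / m)) := by ring
    _ = _ := by rw [mul_sum_mul_klFun_div hm.ne' hmean]

end WeightedSums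

/-- **Uniform defect inequality for `H(x) = x ln x` (Lemma 3.1).**
If `d₁,…,d_N, p₁,…,p_N ≥ 0` with `Σ p_i = 1` and `d := Σ p_i d_i ≠ 0`, then
`Σ p_i H(d_i) − H(d) ≥ (1/2)·d·(Σ p_i |d_i/d − 1|)²`, where `H(x) = x ln x`
(with the convention `0 ln 0 = 0`, which holds for `Real.log`). -/
theorem entropy_defect (N : ℕ) (d p : Fin N → ℝ)
    (hd : ∀ i, 0 ≤ d i) (hp : ∀ i, 0 ≤ p i)
    (hsum : ∑ i, p i = 1) (hD : ∑ i, p i * d i ≠ 0) :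
    (1 / 2) * (∑ i, p i * d i) * (∑ i, p i * |d i / (∑ j, p j * d j) - 1|) ^ 2 ≤
      (∑ i, p i * (d i * Real.log (d i))) -
        (∑ i, p i * d i) * Real.log (∑ i, p i * d i) := by
  have hpos : 0 < ∑ i, p i * d i := (sum_nonneg fun i _ ↦ mul_nonneg (hp i) (hd i)).lt_of_ne' hD
  simpa [hsum] using entropy_defect_general (s := univ) (fun i _ ↦ hd i) (fun i _ ↦ hp i)
    hpos (by rw [hsum, mul_one])
end

section
/- Let G be a graph, let A, A' be subsets of V(G), let P be a partition of A and P' a partition of A', and let Q be a refinement of P and Q' a refinement of P'. Then H(Q,Q') ≥ H(P,P'). -/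
open Finset
open scoped Classical

/-- The function `H(x) = x ln x` (with `0 ln 0 = 0`, which holds for `Real.log`). -/
noncomputable def Hent (x : ℝ) : ℝ := x * Real.log x

/-- The entropy potential `H(P,P')` of a partition `P` of `A ⊆ V(G)` and a partition `P'`
of `A' ⊆ V(G)`: `H(P,P') = Σ_{W ∈ P, W' ∈ P'} (|W||W'|/(|A||A'|))·H(d(W,W'))`. -/
noncomputable def pot {V : Type*} [Fintype V] [DecidableEq V] (G : SimpleGraph V)
    {A A' : Finset V} (P : Finpartition A) (P' : Finpartition A') : ℝ :=
  ∑ W ∈ P.parts, ∑ W' ∈ P'.parts,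
    ((W.card : ℝ) * W'.card / ((A.card : ℝ) * A'.card)) * Hent (dens G W W')

/-!
The density of a pair of sets is the weighted average of the densities between the parts of any
partitions of the two sets, the pair `(u, v)` having weight `|u||v|`. Jensen's inequality for the
convex function `x ln x` therefore bounds the contribution of each pair of coarse parts by the total
contribution of the pairs of fine parts inside it, and a refinement distributes the fine parts among
the coarse ones.
-/

section Refinement

variable {α : Type*} [DistribLattice α] [OrderBot α] [DecidableEq α] {a : α} {P Q : Finpartition a}

lemma mem_parts_restrict_iff_of_le (hQP : Q ≤ P) {w : α} (hw : w ∈ P.parts) {u : α} :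
    u ∈ (Q.restrict (P.le hw)).parts ↔ u ∈ Q.parts ∧ u ≤ w := by
  simp only [Finpartition.restrict, mem_erase, mem_image]
  constructor
  · rintro ⟨hne, v, hv, rfl⟩
    obtain ⟨w', hw', hvw'⟩ := hQP hv
    obtain rfl : w' = w := P.disjoint.elim hw' hw fun hdisj =>
      hne (hdisj.mono_left hvw').eq_bot
    rw [inf_eq_left.2 hvw']
    exact ⟨hv, hvw'⟩
  · rintro ⟨hu, huw⟩
    exact ⟨Q.ne_bot hu, u, hu, inf_eq_left.2 huw⟩

lemma sum_sum_parts_restrict_of_le {M : Type*} [AddCommMonoid M] (hQP : Q ≤ P) (f : α → M) :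
    ∑ w ∈ P.parts.attach, ∑ u ∈ (Q.restrict (P.le w.2)).parts, f u = ∑ u ∈ Q.parts, f u := by
  have hparts : P.parts.attach.biUnion (fun w => (Q.restrict (P.le w.2)).parts) = Q.parts := by
    ext u
    simp only [mem_biUnion, mem_attach, true_and, Subtype.exists,
      mem_parts_restrict_iff_of_le hQP (Subtype.prop _)]
    exact ⟨fun ⟨_, _, hu, _⟩ => hu, fun hu => (hQP hu).imp fun w ⟨hw, huw⟩ => ⟨hw, hu, huw⟩⟩
  rw [← hparts, sum_biUnion]
  intro w _ w' _ hne
  refine Finset.disjoint_left.2 fun u hu hu' => ?_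
  rw [mem_parts_restrict_iff_of_le hQP w.2] at hu
  rw [mem_parts_restrict_iff_of_le hQP w'.2] at hu'
  have hdisj : Disjoint w.1 w'.1 := P.disjoint w.2 w'.2 (Subtype.coe_injective.ne hne)
  exact Q.ne_bot hu.1 (disjoint_self.1 (hdisj.mono hu.2 hu'.2))

end Refinement

section EdgeDensity

variable {𝕜 α β : Type*} {s : Finset α} {t : Finset β}

lemma sum_card_mul_card_parts_s9 [DecidableEq α] [DecidableEq β] [Semiring 𝕜]
    (R : Finpartition s) (R' : Finpartition t) :
    ∑ p ∈ R.parts ×ˢ R'.parts, (#p.1 : 𝕜) * #p.2 = #s * #t := by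
  rw [← R.sum_card_parts, ← R'.sum_card_parts, Nat.cast_sum, Nat.cast_sum, sum_mul_sum, sum_product]

variable [Field 𝕜] (r : α → β → Prop) [∀ x, DecidablePred (r x)]

lemma card_mul_card_mul_edgeDensity [CharZero 𝕜] (s : Finset α) (t : Finset β) :
    (#s : 𝕜) * #t * (Rel.edgeDensity r s t : 𝕜) = #(Rel.interedges r s t) := by
  have hzero : (#s : 𝕜) * #t = 0 → (#(Rel.interedges r s t) : 𝕜) = 0 := by
    have hle := Rel.card_interedges_le_mul r s t
    norm_cast
    lia
  simpa [Rel.edgeDensity] using mul_div_cancel_of_imp' hzero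

variable [DecidableEq α] [DecidableEq β]

lemma centerMass_edgeDensity_parts [CharZero 𝕜] (R : Finpartition s) (R' : Finpartition t) :
    (R.parts ×ˢ R'.parts).centerMass (fun p => (#p.1 : 𝕜) * #p.2)
      (fun p => (Rel.edgeDensity r p.1 p.2 : 𝕜)) = Rel.edgeDensity r s t := by
  simp only [centerMass, sum_card_mul_card_parts_s9, smul_eq_mul, card_mul_card_mul_edgeDensity]
  rw [← Nat.cast_sum, ← Rel.card_interedges_finpartition, inv_mul_eq_div]
  simp [Rel.edgeDensity]

/-- The potential of a pair of partitions with respect to a relation `r` and a function `φ`: the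
average of `φ` over the densities of `r` between the parts, weighted by the sizes of the parts.
For the adjacency relation of a graph and `φ x = x ln x` this is `pot`. -/
def relPotential (φ : 𝕜 → 𝕜) (P : Finpartition s) (P' : Finpartition t) : 𝕜 :=
  ∑ u ∈ P.parts, ∑ v ∈ P'.parts, (#u : 𝕜) * #v / (#s * #t) * φ (Rel.edgeDensity r u v)

lemma relPotential_eq_sum_div (φ : 𝕜 → 𝕜) (P : Finpartition s) (P' : Finpartition t) :
    relPotential r φ P P' =
      (∑ u ∈ P.parts, ∑ v ∈ P'.parts, (#u : 𝕜) * #v * φ (Rel.edgeDensity r u v)) /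
        (#s * #t) := by
  simp only [relPotential, div_mul_eq_mul_div, sum_div]

variable [LinearOrder 𝕜] [IsStrictOrderedRing 𝕜]

lemma card_mul_card_mul_map_edgeDensity_le {φ : 𝕜 → 𝕜} (hφ : ConvexOn 𝕜 (Set.Icc 0 1) φ)
    (R : Finpartition s) (R' : Finpartition t) :
    (#s : 𝕜) * #t * φ (Rel.edgeDensity r s t) ≤
      ∑ u ∈ R.parts, ∑ v ∈ R'.parts, (#u : 𝕜) * #v * φ (Rel.edgeDensity r u v) := by
  obtain rfl | hs := s.eq_empty_or_nonempty
  · simp [Finpartition.parts_eq_empty_iff.2 (bot_eq_empty (α := α)).symm]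
  obtain rfl | ht := t.eq_empty_or_nonempty
  · simp [Finpartition.parts_eq_empty_iff.2 (bot_eq_empty (α := β)).symm]
  have hpos : (0 : 𝕜) < #s * #t := by exact_mod_cast Nat.mul_pos hs.card_pos ht.card_pos
  have jensen := hφ.map_centerMass_le (t := R.parts ×ˢ R'.parts)
    (w := fun p => (#p.1 : 𝕜) * #p.2) (p := fun p => (Rel.edgeDensity r p.1 p.2 : 𝕜))
    (fun p _ => by positivity) (by rwa [sum_card_mul_card_parts_s9])
    (fun p _ => ⟨by exact_mod_cast Rel.edgeDensity_nonneg r p.1 p.2,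
      by exact_mod_cast Rel.edgeDensity_le_one r p.1 p.2⟩)
  rw [centerMass_edgeDensity_parts, centerMass, sum_card_mul_card_parts_s9, smul_eq_mul,
    le_inv_mul_iff₀ hpos] at jensen
  rwa [← sum_product' (f := fun u v => (#u : 𝕜) * #v * φ (Rel.edgeDensity r u v))]

theorem potential_mono_refine_general {φ : 𝕜 → 𝕜} (hφ : ConvexOn 𝕜 (Set.Icc 0 1) φ)
    {P Q : Finpartition s} {P' Q' : Finpartition t} (hQ : Q ≤ P) (hQ' : Q' ≤ P') :
    relPotential r φ P P' ≤ relPotential r φ Q Q' := by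
  rw [relPotential_eq_sum_div, relPotential_eq_sum_div]
  refine div_le_div_of_nonneg_right ?_ (by positivity)
  let F (u : Finset α) (v : Finset β) : 𝕜 := #u * #v * φ (Rel.edgeDensity r u v)
  calc ∑ w ∈ P.parts, ∑ w' ∈ P'.parts, F w w'
    _ = ∑ w ∈ P.parts.attach, ∑ w' ∈ P'.parts.attach, F w w' := by
      rw [← sum_attach P.parts]
      exact sum_congr rfl fun w _ => (sum_attach P'.parts (F w)).symm
    _ ≤ ∑ w ∈ P.parts.attach, ∑ w' ∈ P'.parts.attach,
          ∑ u ∈ (Q.restrict (P.le w.2)).parts, ∑ v ∈ (Q'.restrict (P'.le w'.2)).parts, F u v :=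
      sum_le_sum fun w _ => sum_le_sum fun w' _ =>
        card_mul_card_mul_map_edgeDensity_le r hφ _ _
    _ = ∑ w ∈ P.parts.attach, ∑ u ∈ (Q.restrict (P.le w.2)).parts, ∑ v ∈ Q'.parts, F u v := by
      refine sum_congr rfl fun w _ => sum_comm.trans (sum_congr rfl fun u _ => ?_)
      exact sum_sum_parts_restrict_of_le hQ' (F u)
    _ = ∑ u ∈ Q.parts, ∑ v ∈ Q'.parts, F u v :=
      sum_sum_parts_restrict_of_le hQ fun u => ∑ v ∈ Q'.parts, F u v

end EdgeDensity

lemma dens_eq_edgeDensity {V : Type*} [Fintype V] (G : SimpleGraph V) (A B : Finset V) :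
    dens G A B = (G.edgeDensity A B : ℝ) := by
  simp [_root_.dens, eCnt, SimpleGraph.edgeDensity_def, SimpleGraph.interedges_def]

lemma pot_eq_relPotential {V : Type*} [Fintype V] [DecidableEq V] (G : SimpleGraph V)
    {A A' : Finset V} (P : Finpartition A) (P' : Finpartition A') :
    pot G P P' = relPotential G.Adj Hent P P' := by
  simp only [pot, relPotential, dens_eq_edgeDensity, SimpleGraph.edgeDensity]

lemma convexOn_Hent : ConvexOn ℝ (Set.Ici 0) Hent :=
  Real.convexOn_mul_log

/-- **Monotonicity of the potential under refinement (Claim 3.4(ii)).**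
If `Q` refines `P` (partitions of `A ⊆ V(G)`) and `Q'` refines `P'` (partitions of
`A' ⊆ V(G)`), then `H(Q,Q') ≥ H(P,P')`. -/
theorem potential_mono_refine {V : Type*} [Fintype V] [DecidableEq V] (G : SimpleGraph V)
    (A A' : Finset V) (P Q : Finpartition A) (P' Q' : Finpartition A')
    (hQ : Q ≤ P) (hQ' : Q' ≤ P') :
    pot G P P' ≤ pot G Q Q' := by
  rw [pot_eq_relPotential, pot_eq_relPotential]
  exact potential_mono_refine_general G.Adj
    (convexOn_Hent.subset Set.Icc_subset_Ici_self (convex_Icc 0 1)) hQ hQ'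
end
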